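/- arXiv:2208.08756 — 2 statements merged into one kernel-verified Lean document; each statement's English description precedes it below -/
import Mathlib

section
/- Let q be a prime power with q not in {2,3,4,5,9}. Then the weak normal covering number of PSL_2(q) equals 2: there exist two proper subgroups H and K of PSL_2(q) such that every element g of PSL_2(q) satisfies phi(g) in H or phi(g) in K for some automorphism phi of PSL_2(q), and no single proper subgroup L of PSL_2(q) has the property that every element of PSL_2(q) is mapped into L by some automorphism. -/
/-- The projective special linear group `PSL_n(F)`: the quotient of `SL_n(F)` by its center. -/
abbrev ProjSL (n : ℕ) (F : Type*) [Field F] : Type _ :=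
  Matrix.SpecialLinearGroup (Fin n) F ⧸
    Subgroup.center (Matrix.SpecialLinearGroup (Fin n) F)

/-!
`PSL₂(q)` acts on the `q + 1` points of the projective line. A nontrivial element fixes at most two
points, and a nontrivial power of it fixes no further point.

Elements with a fixed point are conjugate into a point stabilizer. The characteristic polynomial of
any other element is irreducible, so the element is conjugate into the nonsplit torus, the image of
the group of norm-one units of `F_{q²}`; these two proper subgroups form a covering.

Conversely, an element fixes a point exactly when it normalizes a nontrivial `p`-subgroup, so having
a fixed point is invariant under all automorphisms. A subgroup `L` meeting every automorphism class
therefore contains an element of order `p`, a fixed-point-free element `x` with `q + 1 ∣ 2 |x|`, and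
an element `y` generating the stabilizer of two points, with `q - 1 ∣ 2 |y|`. Elements of coprime
order acting freely on an orbit force its size to be divisible by the product of their orders: `p`
and `|x|` make `L` transitive, `p` and `|y|` make it 2-transitive. As `L` also contains the
stabilizer of two points, `L` is the whole group.
-/

section MoebiusAction

open scoped Pointwise

theorem not_dvd_sub_two_of_modEq_one {n p : ℕ} (hp : p ≠ 1) (hn : 2 ≤ n) (h : n ≡ 1 [MOD p]) :
    ¬ p ∣ n - 2 := by
  intro hdvd
  have htwo : n ≡ 2 [MOD p] := ((Nat.modEq_iff_dvd' hn).2 hdvd).symm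
  exact hp (Nat.dvd_one.1 ((Nat.modEq_iff_dvd' one_le_two).1 (h.symm.trans htwo)))

variable {G X : Type*} [Group G] [MulAction G X]

theorem eq_top_of_isMultiplyPretransitive_two [Finite G] {L : Subgroup G}
    [hL : MulAction.IsMultiplyPretransitive L X 2] {y : G} (hyL : y ∈ L) {a b P Q : X} (hab : a ≠ b)
    (hya : y • a = a) (hyb : y • b = b) (hPQ : P ≠ Q)
    (hy : Nat.card ↥(MulAction.stabilizer G P ⊓ MulAction.stabilizer G Q) ≤ orderOf y) :
    L = ⊤ := by
  rw [MulAction.is_two_pretransitive_iff] at hL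
  obtain ⟨k, rfl, rfl⟩ := hL hab hPQ
  set v : G := k * y * (k : G)⁻¹ with hv
  have hvL : v ∈ L := L.mul_mem (L.mul_mem k.2 hyL) (L.inv_mem k.2)
  have hkyk {c : X} (hc : y • c = c) : v • k • c = k • c := by
    rw [Subgroup.smul_def, smul_smul, hv, inv_mul_cancel_right, mul_smul, hc]
  have hle : Subgroup.zpowers v ≤
      MulAction.stabilizer G (k • a) ⊓ MulAction.stabilizer G (k • b) :=
    Subgroup.zpowers_le.2 ⟨hkyk hya, hkyk hyb⟩
  have heq := Subgroup.eq_of_le_of_card_ge hle <| by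
    rwa [Nat.card_zpowers, hv, ← MulAut.conj_apply, MulEquiv.orderOf_eq]
  rw [Subgroup.eq_top_iff']
  intro g
  obtain ⟨m, hma, hmb⟩ := hL ((smul_left_cancel_iff g).not.2 hPQ) hPQ
  have hmg : (m : G) * g ∈ Subgroup.zpowers v := by
    rw [heq]
    exact ⟨(mul_smul _ _ _).trans hma, (mul_smul _ _ _).trans hmb⟩
  exact (L.mul_mem_cancel_left m.2).1 (Subgroup.zpowers_le.2 hvL hmg)

variable (G X) in
/-- The two features of the action of `PSL₂` on the projective line used to count orbits: a
nontrivial element fixes at most two points, and its nontrivial powers fix no further point. -/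
structure IsMoebiusAction : Prop where
  eq_one_of_smul_eq {g : G} {a b c : X} : a ≠ b → a ≠ c → b ≠ c →
    g • a = a → g • b = b → g • c = c → g = 1
  smul_eq_of_pow_smul_eq {g : G} {k : ℕ} {x : X} : g ^ k ≠ 1 → g ^ k • x = x → g • x = x

namespace IsMoebiusAction

theorem orderOf_dvd_ncard [Finite G] (hGX : IsMoebiusAction G X) {g : G} {S : Set X}
    (hS : Set.MapsTo (g • ·) S S) (hfree : ∀ s ∈ S, g • s = s → g = 1) :
    orderOf g ∣ S.ncard := by
  have hpow (k : ℕ) : Set.MapsTo (g ^ k • ·) S S := by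
    simpa only [smul_iterate] using hS.iterate k
  let T : SubMulAction (Subgroup.zpowers g) X :=
    { carrier := S
      smul_mem' := by
        rintro ⟨c, hc⟩ x hx
        obtain ⟨k, rfl⟩ := mem_powers_iff_mem_zpowers.2 hc
        exact hpow k hx }
  have hstab (b : T) : MulAction.stabilizer (Subgroup.zpowers g) b = ⊥ := by
    rw [eq_bot_iff]
    rintro ⟨c, hc⟩ hcb
    obtain ⟨k, rfl⟩ := mem_powers_iff_mem_zpowers.2 hc
    have hfix : g ^ k • (b : X) = b := congrArg Subtype.val hcb
    refine Subtype.ext (by_contra fun hne ↦ hne ?_)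
    simp [hfree b b.2 (hGX.smul_eq_of_pow_smul_eq hne hfix)]
  have hcard := Nat.card_congr (MulAction.selfEquivOrbitsQuotientProd hstab)
  rw [Nat.card_prod, Nat.card_zpowers] at hcard
  exact Dvd.intro_left _ hcard.symm

theorem orderOf_mul_orderOf_dvd_ncard [Finite G] (hGX : IsMoebiusAction G X) {g h : G}
    (hgh : (orderOf g).Coprime (orderOf h)) {S : Set X}
    (hgS : Set.MapsTo (g • ·) S S) (hhS : Set.MapsTo (h • ·) S S)
    (hg : ∀ s ∈ S, g • s = s → g = 1) (hh : ∀ s ∈ S, h • s = s → h = 1) :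
    orderOf g * orderOf h ∣ S.ncard :=
  hgh.mul_dvd_of_dvd_of_dvd (hGX.orderOf_dvd_ncard hgS hg) (hGX.orderOf_dvd_ncard hhS hh)

theorem exists_fixedPoints_eq_singleton [Finite X] (hGX : IsMoebiusAction G X) {p : ℕ}
    [hp : Fact p.Prime] (hX : Nat.card X ≡ 1 [MOD p]) {U : Subgroup G} (hU : IsPGroup p U)
    (hne : U ≠ ⊥) : ∃ P : X, MulAction.fixedPoints U X = {P} := by
  have hmod : (MulAction.fixedPoints U X).ncard ≡ 1 [MOD p] :=
    (hU.card_modEq_card_fixedPoints X).symm.trans hX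
  have hle : (MulAction.fixedPoints U X).ncard ≤ 2 := by
    by_contra! h
    obtain ⟨a, b, c, ha, hb, hc, hab, hac, hbc⟩ := (Set.two_lt_ncard_iff (Set.toFinite _)).1 h
    exact hne (U.eq_bot_iff_forall.2 fun u hu ↦
      hGX.eq_one_of_smul_eq hab hac hbc (ha ⟨u, hu⟩) (hb ⟨u, hu⟩) (hc ⟨u, hu⟩))
  refine Set.ncard_eq_one.1 ?_
  interval_cases (MulAction.fixedPoints U X).ncard
  · exact absurd (Nat.modEq_zero_iff_dvd.1 hmod.symm) hp.out.not_dvd_one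
  · rfl
  · exact absurd ((Nat.modEq_iff_dvd' one_le_two).1 hmod.symm) hp.out.not_dvd_one

theorem exists_smul_eq_of_mem_normalizer [Finite X] (hGX : IsMoebiusAction G X) {p : ℕ}
    [Fact p.Prime] (hX : Nat.card X ≡ 1 [MOD p]) {U : Subgroup G} (hU : IsPGroup p U)
    (hne : U ≠ ⊥) {g : G} (hg : g ∈ Subgroup.normalizer U) : ∃ x : X, g • x = x := by
  obtain ⟨P, hP⟩ := hGX.exists_fixedPoints_eq_singleton hX hU hne
  have hfix (u : U) : u • P = P := (hP ▸ Set.mem_singleton P : P ∈ MulAction.fixedPoints U X) u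
  refine ⟨P, Set.mem_singleton_iff.1 (hP ▸ fun u ↦ ?_)⟩
  have hconj : g⁻¹ * u * g ∈ U := (Subgroup.mem_normalizer_iff''.1 hg _).1 u.2
  calc u • g • P = g • (g⁻¹ * u * g) • P := by simp [mul_smul, Subgroup.smul_def]
    _ = g • P := congrArg _ (hfix ⟨_, hconj⟩)

theorem exists_map_smul_eq [Finite X] (hGX : IsMoebiusAction G X) {p : ℕ} [Fact p.Prime]
    (hX : Nat.card X ≡ 1 [MOD p]) {U : X → Subgroup G} (hU : ∀ x, IsPGroup p (U x))
    (hne : ∀ x, U x ≠ ⊥) (hconj : ∀ (g : G) x, U (g • x) = MulAut.conj g • U x)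
    (φ : G ≃* G) {g : G} {x : X} (hg : g • x = x) : ∃ y : X, φ g • y = y := by
  have hnorm : g ∈ Subgroup.normalizer (U x) :=
    Subgroup.mem_normalizer_iff_map_conj_eq.2 <| by
      nth_rw 2 [← hg]
      exact (hconj g x).symm
  exact hGX.exists_smul_eq_of_mem_normalizer hX ((hU x).map φ.toMonoidHom)
    (by rw [Ne, (U x).map_eq_bot_iff_of_injective φ.injective]; exact hne x)
    ((U x).le_normalizer_map _ ⟨g, hnorm, rfl⟩)

theorem exists_map_smul_eq_iff [Finite X] (hGX : IsMoebiusAction G X) {p : ℕ} [Fact p.Prime]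
    (hX : Nat.card X ≡ 1 [MOD p]) {U : X → Subgroup G} (hU : ∀ x, IsPGroup p (U x))
    (hne : ∀ x, U x ≠ ⊥) (hconj : ∀ (g : G) x, U (g • x) = MulAut.conj g • U x)
    (φ : G ≃* G) {g : G} : (∃ x : X, φ g • x = x) ↔ ∃ x : X, g • x = x := by
  refine ⟨fun ⟨x, hx⟩ ↦ ?_, fun ⟨x, hx⟩ ↦ hGX.exists_map_smul_eq hX hU hne hconj φ hx⟩
  simpa only [φ.symm_apply_apply] using hGX.exists_map_smul_eq hX hU hne hconj φ.symm hx

theorem existsUnique_smul_eq_of_orderOf_eq_prime [Finite X] (hGX : IsMoebiusAction G X) {p : ℕ}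
    [hp : Fact p.Prime] (hX : Nat.card X ≡ 1 [MOD p]) {u : G} (hu : orderOf u = p) :
    ∃! P : X, u • P = P := by
  have hU : IsPGroup p (Subgroup.zpowers u) :=
    IsPGroup.of_card (n := 1) (by rw [Nat.card_zpowers, hu, pow_one])
  have hne : Subgroup.zpowers u ≠ ⊥ := by
    rw [Ne, Subgroup.zpowers_eq_bot, ← orderOf_eq_one_iff, hu]
    exact hp.out.one_lt.ne'
  obtain ⟨P, hP⟩ := hGX.exists_fixedPoints_eq_singleton hX hU hne
  have hiff (x : X) : u • x = x ↔ x = P := by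
    rw [← MulAction.mem_fixedBy, ← MulAction.mem_fixedBy_zpowers_iff_mem_fixedBy,
      ← Set.mem_singleton_iff, ← hP, MulAction.mem_fixedPoints, Subgroup.forall_zpowers]
    rfl
  exact ⟨P, (hiff P).2 rfl, fun x ↦ (hiff x).1⟩

theorem exists_ne_smul_eq [Finite G] [Finite X] [Nontrivial X] (hGX : IsMoebiusAction G X)
    {g : G} {a : X} (ha : g • a = a) (hg : (orderOf g).Coprime (Nat.card X - 1)) :
    ∃ b ≠ a, g • b = b := by
  by_contra! h
  have hdvd : orderOf g ∣ Nat.card X - 1 := by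
    rw [← Set.ncard_singleton a, ← Set.ncard_compl]
    refine hGX.orderOf_dvd_ncard (fun s hs hsa ↦ hs ?_) fun s hs hfix ↦ (h s hs hfix).elim
    exact smul_left_cancel g (hsa.trans ha.symm)
  obtain ⟨b, hb⟩ := exists_ne a
  exact h b hb (by simp [orderOf_eq_one_iff.1 (hg.eq_one_of_dvd hdvd)])

theorem isPretransitive [Finite G] [Finite X] (hGX : IsMoebiusAction G X) {p : ℕ}
    [hp : Fact p.Prime] (hX : Nat.card X ≡ 1 [MOD p]) {u x : G} (hu : orderOf u = p)
    (hxfree : ∀ z : X, x • z ≠ z) (hx : Nat.card X ≤ 2 * orderOf x) :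
    MulAction.IsPretransitive G X := by
  obtain ⟨P, -, hP⟩ := hGX.existsUnique_smul_eq_of_orderOf_eq_prime hX hu
  suffices hmem : ∀ z, P ∈ MulAction.orbit G z from
    (MulAction.isPretransitive_iff_base P).2 fun z ↦ MulAction.mem_orbit_symm.1 (hmem z)
  by_contra! ⟨z, hz⟩
  have hxX : orderOf x ∣ Nat.card X := by
    rw [← Set.ncard_univ]
    exact hGX.orderOf_dvd_ncard (Set.mapsTo_univ _ _) fun s _ hs ↦ (hxfree s hs).elim
  have hpX : ¬ p ∣ Nat.card X := by
    rw [hX.dvd_iff dvd_rfl]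
    exact hp.out.not_dvd_one
  have hcop : (orderOf u).Coprime (orderOf x) := by
    rw [hu, hp.out.coprime_iff_not_dvd]
    exact fun h ↦ hpX (h.trans hxX)
  have hdvd : orderOf u * orderOf x ∣ (MulAction.orbit G z).ncard :=
    hGX.orderOf_mul_orderOf_dvd_ncard hcop
      (fun _ ↦ MulAction.mem_orbit_of_mem_orbit u) (fun _ ↦ MulAction.mem_orbit_of_mem_orbit x)
      (fun s hs hus ↦ absurd (hP s hus ▸ hs) hz) (fun s _ hs ↦ (hxfree s hs).elim)
  have hpos : 0 < (MulAction.orbit G z).ncard :=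
    (MulAction.nonempty_orbit z).ncard_pos
  have hlt : (MulAction.orbit G z).ncard < Nat.card X := by
    rw [← Set.ncard_univ]
    exact Set.ncard_lt_ncard ((Set.ssubset_univ_iff).2 fun h ↦ hz (h ▸ Set.mem_univ P))
  have := Nat.le_of_dvd hpos hdvd
  rw [hu] at this
  nlinarith [hp.out.two_le]

theorem orderOf_dvd_card_sub_two [Finite G] [Finite X] (hGX : IsMoebiusAction G X) {w : G}
    {a b : X} (hab : a ≠ b) (hwa : w • a = a) (hwb : w • b = b) :
    orderOf w ∣ Nat.card X - 2 := by
  rw [← Set.ncard_pair hab, ← Set.ncard_compl]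
  refine hGX.orderOf_dvd_ncard (fun s hs hws ↦ hs ?_) fun s hs hws ↦ ?_
  · exact hws.imp (fun h ↦ smul_left_cancel w (h.trans hwa.symm))
      fun h ↦ smul_left_cancel w (h.trans hwb.symm)
  · exact hGX.eq_one_of_smul_eq hab (fun h ↦ hs (.inl h.symm)) (fun h ↦ hs (.inr h.symm))
      hwa hwb hws

theorem mem_orbit_stabilizer [Finite G] [Finite X] (hGX : IsMoebiusAction G X) {p : ℕ}
    [hp : Fact p.Prime] (hX : Nat.card X ≡ 1 [MOD p]) {u w : G} (hu : orderOf u = p)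
    {P c z : X} (huP : u • P = P) (hwP : w • P = P) (hwc : w • c = c) (hcP : c ≠ P) (hzP : z ≠ P)
    (hw : Nat.card X ≤ 2 * orderOf w + 2) : c ∈ MulAction.orbit (MulAction.stabilizer G P) z := by
  by_contra hc
  set S := MulAction.orbit (MulAction.stabilizer G P) z with hS
  have hP : P ∉ S := fun h ↦ hzP (by
    obtain ⟨g, hg⟩ := MulAction.mem_orbit_symm.1 h
    rw [← hg]
    exact g.2)
  have hX2 : 2 ≤ Nat.card X := by
    rw [← Set.ncard_pair hcP.symm]
    exact Set.ncard_le_card _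
  have hwfree {s : X} (hs : s ∈ S) (hws : w • s = s) : w = 1 :=
    hGX.eq_one_of_smul_eq hcP.symm (fun h ↦ hP (h ▸ hs)) (fun h ↦ hc (h ▸ hs)) hwP hwc hws
  have hpX : ¬ p ∣ Nat.card X - 2 := not_dvd_sub_two_of_modEq_one hp.out.ne_one hX2 hX
  have hcop : (orderOf u).Coprime (orderOf w) := by
    rw [hu, hp.out.coprime_iff_not_dvd]
    exact fun h ↦ hpX (h.trans (hGX.orderOf_dvd_card_sub_two hcP.symm hwP hwc))
  have hdvd : orderOf u * orderOf w ∣ S.ncard :=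
    hGX.orderOf_mul_orderOf_dvd_ncard hcop
      (fun _ ↦ MulAction.mem_orbit_of_mem_orbit (⟨u, huP⟩ : MulAction.stabilizer G P))
      (fun _ ↦ MulAction.mem_orbit_of_mem_orbit (⟨w, hwP⟩ : MulAction.stabilizer G P))
      (fun s hs hus ↦ absurd
        ((hGX.existsUnique_smul_eq_of_orderOf_eq_prime hX hu).unique hus huP ▸ hs) hP)
      (fun s hs ↦ hwfree hs)
  have hle : S.ncard ≤ Nat.card X - 2 := by
    rw [← Set.ncard_pair hcP.symm, ← Set.ncard_compl]
    refine Set.ncard_le_ncard ?_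
    rintro s hs (rfl | rfl)
    exacts [hP hs, hc hs]
  have hpos : 0 < S.ncard := (MulAction.nonempty_orbit z).ncard_pos
  have hge := Nat.le_of_dvd hpos hdvd
  rw [hu] at hge hdvd
  have heq : S.ncard = Nat.card X - 2 := by
    have := Nat.mul_le_mul_right (orderOf w) hp.out.two_le
    omega
  exact hpX (heq ▸ dvd_of_mul_right_dvd hdvd)

theorem isMultiplyPretransitive_two [Finite G] [Finite X] [MulAction.IsPretransitive G X]
    (hGX : IsMoebiusAction G X) {p : ℕ} [Fact p.Prime] (hX : Nat.card X ≡ 1 [MOD p]) {u y : G}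
    (hu : orderOf u = p) {a b : X} (hab : a ≠ b) (hya : y • a = a) (hyb : y • b = b)
    (hy : Nat.card X ≤ 2 * orderOf y + 2) : MulAction.IsMultiplyPretransitive G X 2 := by
  obtain ⟨P, huP, -⟩ := hGX.existsUnique_smul_eq_of_orderOf_eq_prime hX hu
  obtain ⟨g, rfl⟩ := MulAction.exists_smul_eq G a P
  have hmem {z : X} (hz : z ≠ g • a) :
      g • b ∈ MulAction.orbit (MulAction.stabilizer G (g • a)) z :=
    hGX.mem_orbit_stabilizer (w := g * y * g⁻¹) hX hu huP (by simp [mul_smul, hya])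
      (by simp [mul_smul, hyb]) (by simpa using hab.symm) hz
      (by rwa [← MulAut.conj_apply, MulEquiv.orderOf_eq])
  have hmove {c d : X} (hcd : c ≠ d) : ∃ h : G, h • c = g • a ∧ h • d = g • b := by
    obtain ⟨k, hk⟩ := MulAction.exists_smul_eq G c (g • a)
    obtain ⟨⟨l, hla⟩, hl⟩ := hmem (z := k • d) (hk ▸ by simpa using hcd.symm)
    exact ⟨l * k, by rw [mul_smul, hk, hla], (mul_smul _ _ _).trans hl⟩
  rw [MulAction.is_two_pretransitive_iff]
  intro c d c' d' hcd hcd'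
  obtain ⟨h, hc, hd⟩ := hmove hcd
  obtain ⟨h', hc', hd'⟩ := hmove hcd'
  exact ⟨h'⁻¹ * h, by rw [mul_smul, hc, ← hc', inv_smul_smul],
    by rw [mul_smul, hd, ← hd', inv_smul_smul]⟩

theorem subgroup (hGX : IsMoebiusAction G X) (L : Subgroup G) : IsMoebiusAction L X where
  eq_one_of_smul_eq hab hac hbc ha hb hc :=
    Subtype.ext (hGX.eq_one_of_smul_eq hab hac hbc ha hb hc)
  smul_eq_of_pow_smul_eq hne h :=
    hGX.smul_eq_of_pow_smul_eq (fun h1 ↦ hne (Subtype.ext h1)) h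

end IsMoebiusAction
end MoebiusAction

section ProjectiveLine

open Matrix Projectivization
open scoped LinearAlgebra.Projectivization

variable {F : Type*} [Field F]

theorem projSL_mk_eq_one_iff {n : ℕ} {M : Matrix.SpecialLinearGroup (Fin n) F} :
    (QuotientGroup.mk M : ProjSL n F) = 1 ↔ ∃ r : F, r • (1 : Matrix (Fin n) (Fin n) F) = M.1 := by
  rw [QuotientGroup.eq_one_iff, Matrix.SpecialLinearGroup.mem_center_iff]
  refine exists_congr fun r ↦ ?_
  rw [scalar_apply, ← smul_one_eq_diagonal]
  exact and_iff_right_of_imp fun h ↦ by simpa only [← h, det_smul, det_one, mul_one] using M.2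

theorem projSL_mk_smul_mk_eq_iff {n : ℕ} {M : Matrix.SpecialLinearGroup (Fin n) F} {v : Fin n → F}
    {hv : v ≠ 0} :
    (QuotientGroup.mk M : ProjSL n F) • mk F v hv = mk F v hv ↔ ∃ r : F, M • v = r • v := by
  rw [ProjectiveSpecialLinearGroup.smul_proj_mk, smul_mk, mk_eq_mk_iff']
  simp only [eq_comm]

theorem span_pair_eq_top {v w : Fin 2 → F} (h : LinearIndependent F ![v, w]) :
    Submodule.span F {v, w} = ⊤ := by
  have := h.span_eq_top_of_card_eq_finrank' (by simp)
  rwa [Matrix.range_cons_cons_empty] at this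

theorem projSL_two_mk_eq_one {M : Matrix.SpecialLinearGroup (Fin 2) F} {v w : Fin 2 → F} {r : F}
    (h : LinearIndependent F ![v, w]) (hv : M • v = r • v) (hw : M • w = r • w) :
    (QuotientGroup.mk M : ProjSL 2 F) = 1 := by
  refine projSL_mk_eq_one_iff.2 ⟨r, ext_iff_smul.2 fun z ↦ ?_⟩
  obtain ⟨a, b, rfl⟩ := Submodule.mem_span_pair.1 (span_pair_eq_top h ▸ Submodule.mem_top (x := z))
  rw [smul_assoc, one_smul]
  change r • (a • v + b • w) = M • (a • v + b • w)
  rw [smul_add, smul_add, smul_comm M a, smul_comm M b, hv, hw, smul_comm r a, smul_comm r b]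

theorem isMoebiusAction_projSL_two : IsMoebiusAction (ProjSL 2 F) (ℙ F (Fin 2 → F)) where
  eq_one_of_smul_eq {g a b c} hab hac hbc ha hb hc := by
    obtain ⟨M, rfl⟩ := QuotientGroup.mk_surjective g
    induction a using Projectivization.ind with | _ v hv
    induction b using Projectivization.ind with | _ w hw
    induction c using Projectivization.ind with | _ z hz
    have hvw : LinearIndependent F ![v, w] := by
      rwa [← independent_mk_iff_LinearIndependent hv hw, independent_pair_iff_ne]
    obtain ⟨r, hr⟩ := projSL_mk_smul_mk_eq_iff.1 ha
    obtain ⟨s, hs⟩ := projSL_mk_smul_mk_eq_iff.1 hb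
    obtain ⟨t, ht⟩ := projSL_mk_smul_mk_eq_iff.1 hc
    obtain ⟨α, β, rfl⟩ := Submodule.mem_span_pair.1
      (span_pair_eq_top hvw ▸ Submodule.mem_top (x := z))
    rw [smul_add, smul_comm M, smul_comm M, hr, hs, smul_add, smul_smul, smul_smul, smul_smul,
      smul_smul, ← sub_eq_zero, add_sub_add_comm, ← sub_smul, ← sub_smul] at ht
    obtain ⟨hα, hβ⟩ := LinearIndependent.pair_iff.1 hvw _ _ ht
    have hα0 : α ≠ 0 := by
      rintro rfl
      exact hbc.symm ((mk_eq_mk_iff' ..).2 ⟨β, by rw [zero_smul, zero_add]⟩)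
    have hβ0 : β ≠ 0 := by
      rintro rfl
      exact hac.symm ((mk_eq_mk_iff' ..).2 ⟨α, by rw [zero_smul, add_zero]⟩)
    obtain rfl : r = t := mul_left_cancel₀ hα0 (by rw [sub_eq_zero.1 hα, mul_comm])
    obtain rfl : s = r := mul_left_cancel₀ hβ0 (by rw [sub_eq_zero.1 hβ, mul_comm])
    exact projSL_two_mk_eq_one hvw hr hs
  smul_eq_of_pow_smul_eq {g k x} hne hx := by
    obtain ⟨M, rfl⟩ := QuotientGroup.mk_surjective g
    induction x using Projectivization.ind with | _ v hv
    rw [← QuotientGroup.mk_pow] at hne hx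
    obtain ⟨r, hr⟩ := projSL_mk_smul_mk_eq_iff.1 hx
    by_contra hfix
    refine hne (projSL_two_mk_eq_one (w := M • v) ?_ hr ?_)
    · rw [LinearIndependent.pair_iff' hv]
      exact fun s hs ↦ hfix (projSL_mk_smul_mk_eq_iff.2 ⟨s, hs.symm⟩)
    · rw [smul_smul, (Commute.pow_self M k).eq, mul_smul, hr, smul_comm]

end ProjectiveLine

section Unipotent

open Matrix Projectivization
open scoped LinearAlgebra.Projectivization Pointwise

variable {F : Type*} [Field F]

theorem pow_smul_eq_of_smul_sub_eq {ι : Type*} [Fintype ι] [DecidableEq ι]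
    {M : Matrix.SpecialLinearGroup ι F} {v w : ι → F} (hv : M • v = v) (hw : M • w - w = v)
    (k : ℕ) : M ^ k • w = w + (k : F) • v := by
  induction k with
  | zero => simp
  | succ k ih =>
    rw [pow_succ', mul_smul, ih, smul_add, smul_comm M, hv, ← sub_add_cancel (M • w) w, hw]
    push_cast
    module

theorem pow_char_eq_one_of_mem_iwasawaT (p : ℕ) [CharP F p] {n : ℕ} {x : ℙ F (Fin n → F)}
    {u : ProjSL n F} (hu : u ∈ PSL.iwasawaT x) : u ^ p = 1 := by
  obtain ⟨M, hM, rfl⟩ := hu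
  induction x using Projectivization.ind with | _ v hv
  rw [submodule_mk] at hM
  have hpow : M ^ p = 1 := by
    refine Subtype.ext (ext_iff_smul.2 fun w ↦ ?_)
    change M ^ p • w = (1 : Matrix.SpecialLinearGroup (Fin n) F) • w
    obtain ⟨c, hc⟩ := Submodule.mem_span_singleton.1 (hM w)
    rw [pow_smul_eq_of_smul_sub_eq (v := c • v) ?_ hc.symm, CharP.cast_eq_zero,
      zero_smul, add_zero, one_smul]
    rw [smul_comm, Matrix.SpecialLinearGroup.lineStab_fix_of_span v hv M hM]
  rw [← map_pow, hpow, map_one]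

theorem isPGroup_iwasawaT (p : ℕ) [CharP F p] {n : ℕ} (x : ℙ F (Fin n → F)) :
    IsPGroup p (PSL.iwasawaT x) := fun u ↦
  ⟨1, Subtype.ext (by rw [pow_one]; exact pow_char_eq_one_of_mem_iwasawaT p u.2)⟩

theorem iwasawaT_smul (g : ProjSL 2 F) (x : ℙ F (Fin 2 → F)) :
    PSL.iwasawaT (g • x) = MulAut.conj g • PSL.iwasawaT x :=
  PSL2.Iwasawa.is_conj g x

theorem iwasawaT_ne_bot (x : ℙ F (Fin 2 → F)) : PSL.iwasawaT x ≠ ⊥ := by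
  intro hx
  have hbot (y : ℙ F (Fin 2 → F)) : PSL.iwasawaT y = ⊥ := by
    obtain ⟨g, rfl⟩ := MulAction.exists_smul_eq (ProjSL 2 F) x y
    rw [iwasawaT_smul, hx, Subgroup.smul_bot]
  have htop : (⊥ : Subgroup (ProjSL 2 F)) = ⊤ := by
    rw [← PSL.iSup_iwasawaT_eq_top, iSup_congr hbot, iSup_bot]
  exact bot_ne_top htop

theorem exists_orderOf_eq_char (p : ℕ) [hp : Fact p.Prime] [CharP F p] :
    ∃ u : ProjSL 2 F, orderOf u = p := by
  obtain ⟨x⟩ : Nonempty (ℙ F (Fin 2 → F)) := inferInstance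
  obtain ⟨u, hu, hne⟩ := (Subgroup.bot_or_exists_ne_one _).resolve_left (iwasawaT_ne_bot x)
  exact ⟨u, orderOf_eq_prime (pow_char_eq_one_of_mem_iwasawaT p hu) hne⟩

theorem natCard_projectiveLine [Finite F] : Nat.card (ℙ F (Fin 2 → F)) = Nat.card F + 1 :=
  Projectivization.card_of_finrank_two F (Fin 2 → F) (by simp)

theorem natCard_projectiveLine_modEq_one [Finite F] (p : ℕ) [CharP F p] :
    Nat.card (ℙ F (Fin 2 → F)) ≡ 1 [MOD p] := by
  have := Fintype.ofFinite F
  have hp : p ∣ Nat.card F := by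
    rw [← CharP.cast_eq_zero_iff F, Nat.card_eq_fintype_card, FiniteField.cast_card_eq_zero]
  rw [natCard_projectiveLine]
  exact (Nat.modEq_zero_iff_dvd.2 hp).add_right 1

theorem exists_mulEquiv_smul_eq_iff [Finite F] (φ : ProjSL 2 F ≃* ProjSL 2 F) {g : ProjSL 2 F} :
    (∃ x : ℙ F (Fin 2 → F), φ g • x = x) ↔ ∃ x : ℙ F (Fin 2 → F), g • x = x := by
  obtain ⟨p, _⟩ := CharP.exists F
  have : Fact p.Prime := ⟨CharP.char_is_prime F p⟩
  exact isMoebiusAction_projSL_two.exists_map_smul_eq_iff (natCard_projectiveLine_modEq_one p)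
    (isPGroup_iwasawaT p) iwasawaT_ne_bot iwasawaT_smul φ

end Unipotent

section SplitTorus

open Matrix Projectivization
open scoped LinearAlgebra.Projectivization

variable {F : Type*} [Field F]

theorem orderOf_dvd_mul_orderOf_projSL_mk {n : ℕ} (M : Matrix.SpecialLinearGroup (Fin n) F) :
    orderOf M ∣ n * orderOf (QuotientGroup.mk M : ProjSL n F) := by
  obtain ⟨r, hr⟩ := projSL_mk_eq_one_iff.1 (pow_orderOf_eq_one (QuotientGroup.mk M : ProjSL n F))
  set k := orderOf (QuotientGroup.mk M : ProjSL n F)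
  have hdet : r ^ n = 1 := by
    simpa only [← hr, det_smul, det_one, mul_one, Fintype.card_fin] using (M ^ k).2
  refine orderOf_dvd_of_pow_eq_one (Subtype.ext ?_)
  rw [mul_comm, pow_mul, Matrix.SpecialLinearGroup.coe_pow, ← hr, smul_pow, hdet, one_pow, one_smul,
    Matrix.SpecialLinearGroup.coe_one]

variable (F) in
/-- The split torus of `SL₂(F)`: the unit `z` acts as the diagonal matrix with entries `z, z⁻¹`. -/
noncomputable def splitTorus : Fˣ →* Matrix.SpecialLinearGroup (Fin 2) F where
  toFun z := Matrix.SpecialLinearGroup.diag2 z z.ne_zero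
  map_one' := Subtype.ext <| by
    simp [Matrix.SpecialLinearGroup.diag2_coe', one_fin_two]
  map_mul' z w := Subtype.ext <| by
    simp [Matrix.SpecialLinearGroup.diag2_coe', mul_comm]

theorem coe_splitTorus (z : Fˣ) :
    (splitTorus F z : Matrix (Fin 2) (Fin 2) F) = !![(z : F), 0; 0, (z : F)⁻¹] :=
  Matrix.SpecialLinearGroup.diag2_coe' z.ne_zero

theorem splitTorus_injective : Function.Injective (splitTorus F) := fun z w h ↦ by
  have h00 : (splitTorus F z).1 0 0 = (splitTorus F w).1 0 0 := by rw [h]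
  rw [coe_splitTorus, coe_splitTorus] at h00
  exact Units.ext h00

variable (F) in
/-- The point of projective space on the `i`-th coordinate axis. -/
def axisPoint {n : ℕ} (i : Fin n) : ℙ F (Fin n → F) :=
  mk F (Pi.single i 1) (Pi.single_ne_zero_iff.2 one_ne_zero)

theorem axisPoint_injective {n : ℕ} : Function.Injective (axisPoint F : Fin n → ℙ F _) := by
  intro i j h
  obtain ⟨r, hr⟩ := (mk_eq_mk_iff' ..).1 h
  by_contra hij
  simpa [hij] using congrFun hr i

instance nontrivial_projectiveLine : Nontrivial (ℙ F (Fin 2 → F)) :=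
  axisPoint_injective.nontrivial

theorem projSL_mk_smul_axisPoint_eq_iff {n : ℕ} {M : Matrix.SpecialLinearGroup (Fin n) F}
    {i : Fin n} : (QuotientGroup.mk M : ProjSL n F) • axisPoint F i = axisPoint F i ↔
      ∀ j ≠ i, M.1 j i = 0 := by
  rw [axisPoint, projSL_mk_smul_mk_eq_iff, Matrix.SpecialLinearGroup.smul_def,
    Matrix.smul_eq_mulVec, mulVec_single_one]
  constructor
  · rintro ⟨r, hr⟩ j hj
    simpa [hj] using congrFun hr j
  · refine fun h ↦ ⟨M.1 i i, funext fun j ↦ ?_⟩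
    obtain rfl | hj := eq_or_ne j i
    · simp
    · simp [h j hj, hj]

theorem stabilizer_axisPoint_zero_inf_one :
    MulAction.stabilizer (ProjSL 2 F) (axisPoint F (0 : Fin 2)) ⊓
      MulAction.stabilizer (ProjSL 2 F) (axisPoint F (1 : Fin 2)) =
        ((QuotientGroup.mk' _).comp (splitTorus F)).range := by
  ext g
  obtain ⟨M, rfl⟩ := QuotientGroup.mk_surjective g
  rw [Subgroup.mem_inf, MulAction.mem_stabilizer_iff, MulAction.mem_stabilizer_iff]
  constructor
  · rw [projSL_mk_smul_axisPoint_eq_iff, projSL_mk_smul_axisPoint_eq_iff]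
    rintro ⟨h0, h1⟩
    have h10 := h0 1 one_ne_zero
    have h01 := h1 0 zero_ne_one
    have hdet : M.1 0 0 * M.1 1 1 = 1 := by
      simpa only [det_fin_two, h01, zero_mul, sub_zero] using M.2
    refine ⟨Units.mkOfMulEqOne _ _ hdet, congrArg _ (Subtype.ext ?_)⟩
    rw [coe_splitTorus]
    conv_rhs => rw [eta_fin_two M.1, h01, h10, eq_inv_of_mul_eq_one_right hdet]
    rfl
  · rintro ⟨z, hz⟩
    rw [← hz, MonoidHom.comp_apply, QuotientGroup.mk'_apply,
      projSL_mk_smul_axisPoint_eq_iff, projSL_mk_smul_axisPoint_eq_iff, coe_splitTorus]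
    simp [Fin.forall_fin_two]

variable (F) in
theorem exists_zpowers_eq_stabilizer_inf_stabilizer [Finite F] :
    ∃ (t : ProjSL 2 F) (P Q : ℙ F (Fin 2 → F)), P ≠ Q ∧ Nat.card F - 1 ∣ 2 * orderOf t ∧
      MulAction.stabilizer (ProjSL 2 F) P ⊓ MulAction.stabilizer (ProjSL 2 F) Q =
        Subgroup.zpowers t := by
  obtain ⟨ζ, hζ⟩ := isCyclic_iff_exists_zpowers_eq_top.1 (inferInstance : IsCyclic Fˣ)
  have hord : orderOf (splitTorus F ζ) = Nat.card F - 1 := by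
    rw [orderOf_injective _ splitTorus_injective, orderOf_eq_card_of_zpowers_eq_top hζ,
      Nat.card_units]
  refine ⟨QuotientGroup.mk (splitTorus F ζ), axisPoint F 0, axisPoint F 1,
    axisPoint_injective.ne zero_ne_one, hord ▸ orderOf_dvd_mul_orderOf_projSL_mk _, ?_⟩
  rw [stabilizer_axisPoint_zero_inf_one, MonoidHom.range_eq_map, ← hζ,
    MonoidHom.map_zpowers]
  rfl

end SplitTorus

section NonsplitTorus

open Matrix Projectivization
open scoped LinearAlgebra.Projectivization

variable {F E : Type*} [Field F] [Field E] [Algebra F E]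

variable (F E) in
/-- The group of units of norm one of a field extension `E / F`. -/
abbrev NormOneUnits : Type _ := (Units.map (Algebra.norm F : E →* F)).ker

/-- The torus of `SL_n(F)` attached to an extension `E / F` of degree `n` with basis `b`: a unit of
norm one acts on `E ≃ Fⁿ` by multiplication. -/
noncomputable def nonsplitTorus {n : ℕ} (b : Module.Basis (Fin n) F E) :
    NormOneUnits F E →* Matrix.SpecialLinearGroup (Fin n) F where
  toFun z := ⟨Algebra.leftMulMatrix b z.1, by
    rw [← Algebra.norm_eq_matrix_det]
    exact congrArg Units.val z.2⟩
  map_one' := Subtype.ext (map_one (Algebra.leftMulMatrix b))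
  map_mul' z w := Subtype.ext (map_mul (Algebra.leftMulMatrix b) (z.1 : E) w.1)

theorem nonsplitTorus_injective {n : ℕ} (b : Module.Basis (Fin n) F E) :
    Function.Injective (nonsplitTorus b) := fun _ _ h ↦
  Subtype.ext (Units.ext (Algebra.leftMulMatrix_injective b (congrArg Subtype.val h)))

theorem projSL_mk_nonsplitTorus_eq_one {n : ℕ} (b : Module.Basis (Fin n) F E)
    {z : NormOneUnits F E} {x : ℙ F (Fin n → F)}
    (hx : (QuotientGroup.mk (nonsplitTorus b z) : ProjSL n F) • x = x) :
    (QuotientGroup.mk (nonsplitTorus b z) : ProjSL n F) = 1 := by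
  induction x using Projectivization.ind with | _ v hv
  obtain ⟨r, hr⟩ := projSL_mk_smul_mk_eq_iff.1 hx
  obtain ⟨w, rfl⟩ := b.equivFun.surjective v
  have hw : w ≠ 0 := by
    rintro rfl
    exact hv (map_zero _)
  have hzw : (z.1 : E) * w = algebraMap F E r * w := by
    refine b.equivFun.injective ?_
    rw [← Algebra.smul_def, map_smul, ← hr]
    exact (Algebra.leftMulMatrix_mulVec_repr b (z.1 : E) w).symm
  refine projSL_mk_eq_one_iff.2 ⟨r, ?_⟩
  rw [← Algebra.algebraMap_eq_smul_one, ← AlgHom.commutes (Algebra.leftMulMatrix b),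
    ← mul_right_cancel₀ hw hzw]
  rfl

theorem natCard_normOneUnits [Finite E] (hE : Module.finrank F E = 2) :
    Nat.card (NormOneUnits F E) = Nat.card F + 1 := by
  have := Module.finite_of_finrank_eq_succ hE
  have := Finite.of_injective _ (algebraMap F E).injective
  have h := (Units.map (Algebra.norm F : E →* F)).ker.card_mul_index
  rw [Subgroup.index_ker, MonoidHom.range_eq_top.2 (FiniteField.unitsMap_norm_surjective F E),
    Subgroup.card_top, Nat.card_units, Nat.card_units,
    Module.natCard_eq_pow_finrank (K := F) (V := E), hE] at h
  have hsq : Nat.card F ^ 2 - 1 = (Nat.card F + 1) * (Nat.card F - 1) := Nat.sq_sub_sq _ 1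
  rw [hsq] at h
  exact Nat.eq_of_mul_eq_mul_right (Nat.sub_pos_of_lt Finite.one_lt_card) h

theorem finrank_eq_of_basis_fin {n : ℕ} (b : Module.Basis (Fin n) F E) : Module.finrank F E =
    n := by
  rw [Module.finrank_eq_card_basis b, Fintype.card_fin]

theorem exists_card_add_one_dvd_and_forall_smul_ne [Finite E] (b : Module.Basis (Fin 2) F E) :
    ∃ x : ProjSL 2 F, Nat.card F + 1 ∣ 2 * orderOf x ∧ ∀ P : ℙ F (Fin 2 → F), x • P ≠ P := by
  have := Finite.of_injective _ (algebraMap F E).injective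
  obtain ⟨ζ, hζ⟩ := IsCyclic.exists_ofOrder_eq_natCard (α := NormOneUnits F E)
  have hord : Nat.card F + 1 ∣ 2 * orderOf (QuotientGroup.mk (nonsplitTorus b ζ) : ProjSL 2 F) := by
    rw [← natCard_normOneUnits (finrank_eq_of_basis_fin b), ← hζ,
      ← orderOf_injective _ (nonsplitTorus_injective b)]
    exact orderOf_dvd_mul_orderOf_projSL_mk _
  refine ⟨_, hord, fun P hP ↦ ?_⟩
  rw [projSL_mk_nonsplitTorus_eq_one b hP, orderOf_one] at hord
  have := Nat.le_of_dvd two_pos hord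
  have : 1 < Nat.card F := Finite.one_lt_card
  omega

theorem exists_smul_eq_of_isRoot_charpoly {n : ℕ} {M : Matrix.SpecialLinearGroup (Fin n) F} {r : F}
    (hr : M.1.charpoly.IsRoot r) :
    ∃ x : ℙ F (Fin n → F), (QuotientGroup.mk M : ProjSL n F) • x = x := by
  rw [Polynomial.IsRoot, eval_charpoly, ← exists_mulVec_eq_zero_iff] at hr
  obtain ⟨v, hv, h⟩ := hr
  refine ⟨mk F v hv, projSL_mk_smul_mk_eq_iff.2 ⟨r, ?_⟩⟩
  rw [sub_mulVec, sub_eq_zero, scalar_apply, diagonal_const_mulVec] at h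
  exact h.symm

theorem irreducible_charpoly_of_forall_smul_ne {M : Matrix.SpecialLinearGroup (Fin 2) F}
    (hM : ∀ x : ℙ F (Fin 2 → F), (QuotientGroup.mk M : ProjSL 2 F) • x ≠ x) :
    Irreducible M.1.charpoly := by
  have hdeg : M.1.charpoly.natDegree = 2 := by rw [charpoly_natDegree_eq_dim, Fintype.card_fin]
  rw [Polynomial.irreducible_iff_roots_eq_zero_of_degree_le_three hdeg.ge (by omega),
    Multiset.eq_zero_iff_forall_notMem]
  intro r hr
  obtain ⟨x, hx⟩ := exists_smul_eq_of_isRoot_charpoly (Polynomial.isRoot_of_mem_roots hr)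
  exact hM x hx

theorem exists_aeval_eq_zero_of_natDegree_dvd_finrank [Finite E] {f : Polynomial F}
    (hf : Irreducible f) (hdvd : f.natDegree ∣ Module.finrank F E) :
    ∃ z : E, Polynomial.aeval z f = 0 := by
  have := Fact.mk hf
  rw [← AdjoinRoot.powerBasis_dim hf.ne_zero, ← PowerBasis.finrank] at hdvd
  obtain ⟨φ⟩ := FiniteField.nonempty_algHom_of_finrank_dvd hdvd
  exact ⟨φ (AdjoinRoot.root f), by
    rw [Polynomial.aeval_algHom_apply, AdjoinRoot.aeval_eq, AdjoinRoot.mk_self, map_zero]⟩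

theorem charpoly_leftMulMatrix_of_irreducible {n : ℕ} (b : Module.Basis (Fin n) F E) {z : E}
    {f : Polynomial F} (hf : Irreducible f) (hmonic : f.Monic) (hdeg : f.natDegree = n)
    (hz : Polynomial.aeval z f = 0) : (Algebra.leftMulMatrix b z).charpoly = f := by
  have hmin : minpoly F (Algebra.leftMulMatrix b z) = f := by
    rw [minpoly.algHom_eq _ (Algebra.leftMulMatrix_injective b),
      minpoly.eq_of_irreducible_of_monic hf hz hmonic]
  refine Polynomial.eq_of_monic_of_dvd_of_natDegree_le hmonic (charpoly_monic _) ?_ ?_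
  · rw [← hmin]
    exact minpoly_dvd_charpoly _
  · rw [charpoly_natDegree_eq_dim, hdeg, Fintype.card_fin]

theorem apply_one_zero_ne_zero_of_irreducible_charpoly {A : Matrix (Fin 2) (Fin 2) F}
    (hA : Irreducible A.charpoly) : A 1 0 ≠ 0 := by
  intro h
  refine hA.not_isRoot_of_natDegree_ne_one ?_ (x := A 0 0) ?_
  · rw [charpoly_natDegree_eq_dim, Fintype.card_fin]
    exact OfNat.ofNat_ne_one 2
  · rw [Polynomial.IsRoot, eval_charpoly, det_fin_two]
    simp [h]

theorem exists_mul_eq_mul_of_charpoly_eq {A B : Matrix (Fin 2) (Fin 2) F}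
    (hAB : A.charpoly = B.charpoly) (hA : A 1 0 ≠ 0) :
    ∃ R : Matrix (Fin 2) (Fin 2) F, R.det = B 1 0 / A 1 0 ∧ R * A = B * R := by
  have htr : A.trace = B.trace := by
    rw [trace_eq_neg_charpoly_coeff, hAB, trace_eq_neg_charpoly_coeff]
  have hdet : A.det = B.det := by rw [det_eq_sign_charpoly_coeff, hAB, det_eq_sign_charpoly_coeff]
  rw [trace_fin_two, trace_fin_two] at htr
  rw [det_fin_two, det_fin_two] at hdet
  refine ⟨!![1, (B 0 0 - A 0 0) / A 1 0; 0, B 1 0 / A 1 0], by simp [det_fin_two], ?_⟩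
  ext i j
  fin_cases i <;> fin_cases j <;>
    simp only [Fin.zero_eta, Fin.mk_one, mul_apply, Fin.sum_univ_two, of_apply, cons_val',
      cons_val_fin_one, cons_val_zero, cons_val_one] <;>
    field_simp
  · ring
  · linear_combination -hdet + B 0 0 * htr
  · ring
  · linear_combination B 1 0 * htr

theorem exists_conj_eq_nonsplitTorus [Finite E] (b : Module.Basis (Fin 2) F E)
    {M : Matrix.SpecialLinearGroup (Fin 2) F} (hM : Irreducible M.1.charpoly) :
    ∃ (N : Matrix.SpecialLinearGroup (Fin 2) F) (z : NormOneUnits F E),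
      N * M * N⁻¹ = nonsplitTorus b z := by
  have hdeg : M.1.charpoly.natDegree = 2 := by rw [charpoly_natDegree_eq_dim, Fintype.card_fin]
  obtain ⟨z, hz⟩ := exists_aeval_eq_zero_of_natDegree_dvd_finrank (E := E) hM
    (hdeg.trans (finrank_eq_of_basis_fin b).symm).dvd
  have hcp := charpoly_leftMulMatrix_of_irreducible b hM (charpoly_monic _) hdeg hz
  have hM10 := apply_one_zero_ne_zero_of_irreducible_charpoly hM
  have hz10 := apply_one_zero_ne_zero_of_irreducible_charpoly (hcp ▸ hM)
  have hnorm : Algebra.norm F z = 1 := by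
    rw [Algebra.norm_eq_matrix_det b, det_eq_sign_charpoly_coeff, hcp, ← det_eq_sign_charpoly_coeff]
    exact M.2
  obtain ⟨R, hdet, hR⟩ := exists_mul_eq_mul_of_charpoly_eq hcp.symm hM10
  have := Module.Basis.finiteDimensional_of_finite b
  obtain ⟨y, hy⟩ := FiniteField.norm_surjective F E (M.1 1 0 / Algebra.leftMulMatrix b z 1 0)
  -- Multiplication by `y` commutes with multiplication by `z` and corrects the determinant of `R`.
  let N : Matrix.SpecialLinearGroup (Fin 2) F := ⟨Algebra.leftMulMatrix b y * R, by
    rw [det_mul, ← Algebra.norm_eq_matrix_det, hy, hdet, div_mul_div_cancel₀ hz10, div_self hM10]⟩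
  have hz0 : z ≠ 0 := by
    rintro rfl
    simp at hnorm
  refine ⟨N, ⟨Units.mk0 z hz0, Units.ext hnorm⟩, mul_inv_eq_iff_eq_mul.2 (Subtype.ext ?_)⟩
  calc Algebra.leftMulMatrix b y * R * M.1
      = Algebra.leftMulMatrix b (y * z) * R := by rw [mul_assoc, hR, map_mul, mul_assoc]
    _ = Algebra.leftMulMatrix b z * (Algebra.leftMulMatrix b y * R) := by
      rw [mul_comm, map_mul, mul_assoc]

end NonsplitTorus

section WeakNormalCovering

open scoped LinearAlgebra.Projectivization

variable {F : Type*} [Field F]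

theorem stabilizer_projectiveLine_ne_top (P : ℙ F (Fin 2 → F)) :
    MulAction.stabilizer (ProjSL 2 F) P ≠ ⊤ := by
  intro h
  obtain ⟨Q, hQ⟩ := exists_ne P
  obtain ⟨g, rfl⟩ := MulAction.exists_smul_eq (ProjSL 2 F) P Q
  exact hQ (h ▸ Subgroup.mem_top g : g ∈ MulAction.stabilizer (ProjSL 2 F) P)

theorem range_projSL_nonsplitTorus_ne_top [Finite F] {E : Type*} [Field E] [Algebra F E]
    (b : Module.Basis (Fin 2) F E) :
    ((QuotientGroup.mk' _).comp (nonsplitTorus b)).range ≠ (⊤ : Subgroup (ProjSL 2 F)) := by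
  intro h
  obtain ⟨p, _⟩ := CharP.exists F
  have hp : Fact p.Prime := ⟨CharP.char_is_prime F p⟩
  obtain ⟨u, hu⟩ := exists_orderOf_eq_char (F := F) p
  obtain ⟨P, hP, -⟩ := isMoebiusAction_projSL_two.existsUnique_smul_eq_of_orderOf_eq_prime
    (natCard_projectiveLine_modEq_one p) hu
  obtain ⟨z, rfl⟩ : u ∈ ((QuotientGroup.mk' _).comp (nonsplitTorus b)).range :=
    h ▸ Subgroup.mem_top u
  refine hp.out.one_lt.ne' ?_
  rw [← hu, orderOf_eq_one_iff]
  exact projSL_mk_nonsplitTorus_eq_one b hP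

variable (F) in
theorem exists_two_subgroups_forall_exists_mulEquiv_mem [Finite F] :
    ∃ H K : Subgroup (ProjSL 2 F), H ≠ ⊤ ∧ K ≠ ⊤ ∧
      ∀ g : ProjSL 2 F, ∃ φ : ProjSL 2 F ≃* ProjSL 2 F, φ g ∈ H ∨ φ g ∈ K := by
  obtain ⟨p, _⟩ := CharP.exists F
  have : Fact p.Prime := ⟨CharP.char_is_prime F p⟩
  let b : Module.Basis (Fin 2) F (FiniteField.Extension F p 2) :=
    Module.finBasisOfFinrankEq F _ (FiniteField.finrank_extension F p 2)
  obtain ⟨P⟩ : Nonempty (ℙ F (Fin 2 → F)) := inferInstance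
  refine ⟨_, _, stabilizer_projectiveLine_ne_top P, range_projSL_nonsplitTorus_ne_top b,
    fun g ↦ ?_⟩
  by_cases hg : ∃ x : ℙ F (Fin 2 → F), g • x = x
  · obtain ⟨x, hx⟩ := hg
    obtain ⟨h, rfl⟩ := MulAction.exists_smul_eq (ProjSL 2 F) x P
    exact ⟨MulAut.conj h, .inl (by simp [mul_smul, hx])⟩
  · obtain ⟨M, rfl⟩ := QuotientGroup.mk_surjective g
    obtain ⟨N, z, hz⟩ := exists_conj_eq_nonsplitTorus b
      (irreducible_charpoly_of_forall_smul_ne (not_exists.1 hg))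
    exact ⟨MulAut.conj (QuotientGroup.mk N : ProjSL 2 F), .inr ⟨z, congrArg _ hz.symm⟩⟩

theorem exists_ne_mulEquiv_smul_eq [Finite F] (φ : ProjSL 2 F ≃* ProjSL 2 F) {g : ProjSL 2 F}
    {P Q : ℙ F (Fin 2 → F)} (hPQ : P ≠ Q) (hP : g • P = P) (hQ : g • Q = Q) :
    ∃ a b : ℙ F (Fin 2 → F), a ≠ b ∧ φ g • a = a ∧ φ g • b = b := by
  obtain ⟨a, ha⟩ := (exists_mulEquiv_smul_eq_iff φ).2 ⟨P, hP⟩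
  have hdvd : orderOf g ∣ Nat.card F - 1 := by
    have h := isMoebiusAction_projSL_two.orderOf_dvd_card_sub_two hPQ hP hQ
    rwa [natCard_projectiveLine] at h
  obtain ⟨b, hba, hb⟩ := isMoebiusAction_projSL_two.exists_ne_smul_eq ha <| by
    rw [natCard_projectiveLine, Nat.add_sub_cancel, φ.orderOf_eq]
    exact Nat.Coprime.coprime_dvd_left hdvd
      ((Nat.coprime_self_sub_left Finite.card_pos).2 (Nat.coprime_one_left _))
  exact ⟨a, b, hba.symm, ha, hb⟩

theorem eq_top_of_forall_exists_mulEquiv_mem [Finite F] {L : Subgroup (ProjSL 2 F)}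
    (hL : ∀ g : ProjSL 2 F, ∃ φ : ProjSL 2 F ≃* ProjSL 2 F, φ g ∈ L) : L = ⊤ := by
  obtain ⟨p, _⟩ := CharP.exists F
  have : Fact p.Prime := ⟨CharP.char_is_prime F p⟩
  let b : Module.Basis (Fin 2) F (FiniteField.Extension F p 2) :=
    Module.finBasisOfFinrankEq F _ (FiniteField.finrank_extension F p 2)
  have hLX := isMoebiusAction_projSL_two.subgroup L
  have hX := natCard_projectiveLine_modEq_one (F := F) p
  obtain ⟨u, hu⟩ := exists_orderOf_eq_char (F := F) p
  obtain ⟨φ, hφ⟩ := hL u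
  have hφu : orderOf (⟨φ u, hφ⟩ : L) = p := by rw [Subgroup.orderOf_mk, φ.orderOf_eq, hu]
  obtain ⟨x, hxord, hxfree⟩ := exists_card_add_one_dvd_and_forall_smul_ne b
  obtain ⟨χ, hχ⟩ := hL x
  have : MulAction.IsPretransitive L (ℙ F (Fin 2 → F)) := by
    refine hLX.isPretransitive (x := ⟨χ x, hχ⟩) hX hφu
      (not_exists.1 ((exists_mulEquiv_smul_eq_iff χ).not.2 (not_exists.2 hxfree))) ?_
    rw [natCard_projectiveLine, Subgroup.orderOf_mk, χ.orderOf_eq]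
    exact Nat.le_of_dvd (mul_pos two_pos (orderOf_pos x)) hxord
  obtain ⟨t, P, Q, hPQ, htord, ht⟩ := exists_zpowers_eq_stabilizer_inf_stabilizer F
  obtain ⟨htP, htQ⟩ := Subgroup.mem_inf.1 (ht ▸ Subgroup.mem_zpowers t)
  obtain ⟨ψ, hψ⟩ := hL t
  obtain ⟨c, d, hcd, hc, hd⟩ := exists_ne_mulEquiv_smul_eq ψ hPQ htP htQ
  have : MulAction.IsMultiplyPretransitive L (ℙ F (Fin 2 → F)) 2 := by
    refine hLX.isMultiplyPretransitive_two (y := ⟨ψ t, hψ⟩) hX hφu hcd hc hd ?_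
    rw [natCard_projectiveLine, Subgroup.orderOf_mk, ψ.orderOf_eq]
    have := Nat.le_of_dvd (mul_pos two_pos (orderOf_pos t)) htord
    omega
  refine eq_top_of_isMultiplyPretransitive_two hψ hcd hc hd hPQ ?_
  rw [ht, Nat.card_zpowers, ψ.orderOf_eq]

end WeakNormalCovering

theorem gammaW_PSL2_eq_two_general (F : Type*) [Field F] [Finite F] :
    (∃ H K : Subgroup (ProjSL 2 F), H ≠ ⊤ ∧ K ≠ ⊤ ∧
        ∀ g : ProjSL 2 F,
          ∃ φ : ProjSL 2 F ≃* ProjSL 2 F, φ g ∈ H ∨ φ g ∈ K) ∧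
      ¬ ∃ L : Subgroup (ProjSL 2 F), L ≠ ⊤ ∧
          ∀ g : ProjSL 2 F,
            ∃ φ : ProjSL 2 F ≃* ProjSL 2 F, φ g ∈ L :=
  ⟨exists_two_subgroups_forall_exists_mulEquiv_mem F,
    fun ⟨_, hne, hL⟩ ↦ hne (eq_top_of_forall_exists_mulEquiv_mem hL)⟩

/-- **The weak normal covering number of `PSL₂(q)` equals 2** for every prime power
`q ∉ {2,3,4,5,9}`: there are two proper subgroups `H`, `K` such that every element is
mapped into `H` or `K` by some automorphism, and no single proper subgroup has the
corresponding covering property. -/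
theorem gammaW_PSL2_eq_two (q : ℕ) (hq : IsPrimePow q)
    (h2 : q ≠ 2) (h3 : q ≠ 3) (h4 : q ≠ 4) (h5 : q ≠ 5) (h9 : q ≠ 9)
    (F : Type*) [Field F] [Fintype F] (hF : Fintype.card F = q) :
    (∃ H K : Subgroup (ProjSL 2 F), H ≠ ⊤ ∧ K ≠ ⊤ ∧
        ∀ g : ProjSL 2 F,
          ∃ φ : ProjSL 2 F ≃* ProjSL 2 F, φ g ∈ H ∨ φ g ∈ K) ∧
      ¬ ∃ L : Subgroup (ProjSL 2 F), L ≠ ⊤ ∧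
          ∀ g : ProjSL 2 F,
            ∃ φ : ProjSL 2 F ≃* ProjSL 2 F, φ g ∈ L :=
  gammaW_PSL2_eq_two_general F
end

section
/- Let q be any prime power. Then the weak normal covering number of PSL_3(q) equals 2: there exist two proper subgroups H and K of PSL_3(q) such that every element g of PSL_3(q) satisfies phi(g) in H or phi(g) in K for some automorphism phi of PSL_3(q), and no single proper subgroup L of PSL_3(q) has the property that every element of PSL_3(q) is mapped into L by some automorphism. -/
/-!
Covering. An element of `SL₃(q)` with an eigenvalue in `𝔽_q` fixes a point of the projective plane,
and point stabilizers are conjugate. Otherwise its characteristic polynomial is an irreducible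
cubic, so it generates a copy of `𝔽_{q³}` in the matrix algebra, and all such copies are conjugate
under `GL₃(q)`.

Lower bound. Let `L` meet every automorphism class and let `M` be its preimage in `SL₃(q)`.
* `M` contains a transvection: among the elements of order `p` in `PSL₃(q)`, the transvections are
  those with nonabelian centralizer, a property that automorphisms preserve.
* `M` is transitive on the projective plane. The order `n` of a Singer cycle in `PSL₃(q)` divides
  `|M|`, is coprime to the order of a point stabilizer and satisfies `3 n ≥ q² + q + 1`. So if there
  are several orbits, each has size `n` or `2 n`. Then every element of `M` of suitable odd prime
  order fixes a point in two different orbits and hence has the form `1 + v fᵀ`. This contradicts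
  that `M` contains a regular unipotent element (`p` odd), or an element of order a prime divisor
  of `q + 1` (`p = 2`).
* A transitive subgroup containing a transvection is `SL₃(q)`. By transitivity there are two
  independent axes at each center. A counting argument then shows that the centers sharing an axis
  form a whole plane, and by linearity `M` contains all transvections.
-/

open Matrix Polynomial
open scoped MatrixGroups LinearAlgebra.Projectivization

section Transvection
variable {n R F : Type*} [Fintype n] [DecidableEq n] [CommRing R] [Field F]

/-- The subgroup `M` contains `1 + v fᵀ`. By `HasTransvection.dotProduct_eq_zero` this forces
`fᵀ v = 0`, so it is the transvection with center `v` and axis `ker f`, or `1` if `v = 0` or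
`f = 0`. -/
def HasTransvection (M : Subgroup (Matrix.SpecialLinearGroup n R)) (v f : n → R) : Prop :=
  ∃ g ∈ M, (g : Matrix n n R) = 1 + vecMulVec v f

theorem det_one_add_vecMulVec (v f : n → R) : (1 + vecMulVec v f).det = 1 + f ⬝ᵥ v := by
  rw [vecMulVec_eq Unit, det_one_add_replicateCol_mul_replicateRow]

theorem exists_coe_eq_one_add_vecMulVec {v f : n → R} (h : f ⬝ᵥ v = 0) :
    ∃ g : Matrix.SpecialLinearGroup n R, (g : Matrix n n R) = 1 + vecMulVec v f :=
  ⟨⟨1 + vecMulVec v f, by rw [det_one_add_vecMulVec, h, add_zero]⟩, rfl⟩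

theorem coe_inv_of_eq_one_add_vecMulVec {g : Matrix.SpecialLinearGroup n R} {v f : n → R}
    (h : f ⬝ᵥ v = 0) (hg : (g : Matrix n n R) = 1 + vecMulVec v f) :
    ((g⁻¹ : Matrix.SpecialLinearGroup n R) : Matrix n n R) = 1 - vecMulVec v f := by
  have hinv : (g : Matrix n n R) * (1 - vecMulVec v f) = 1 := by
    simp [hg, add_mul, mul_sub, vecMulVec_mul_vecMulVec, h]
  calc ((g⁻¹ : Matrix.SpecialLinearGroup n R) : Matrix n n R)
      = ((g⁻¹ * g : Matrix.SpecialLinearGroup n R) : Matrix n n R) * (1 - vecMulVec v f) := by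
        rw [Matrix.SpecialLinearGroup.coe_mul, mul_assoc, hinv, mul_one]
    _ = 1 - vecMulVec v f := by simp

namespace HasTransvection
variable {M : Subgroup (Matrix.SpecialLinearGroup n R)} {v w f g : n → R}

theorem dotProduct_eq_zero (h : HasTransvection M v f) : f ⬝ᵥ v = 0 := by
  obtain ⟨t, -, ht⟩ := h
  have hdet := t.det_coe
  rwa [ht, det_one_add_vecMulVec, add_eq_left] at hdet

variable (M) in
theorem zero_left (f : n → R) : HasTransvection M 0 f := ⟨1, M.one_mem, by simp⟩

theorem add_left (hv : HasTransvection M v f) (hw : HasTransvection M w f) :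
    HasTransvection M (v + w) f := by
  have hfw := hw.dotProduct_eq_zero
  obtain ⟨s, hsM, hs⟩ := hv
  obtain ⟨t, htM, ht⟩ := hw
  refine ⟨s * t, M.mul_mem hsM htM, ?_⟩
  simp [hs, ht, add_mul, mul_add, vecMulVec_mul_vecMulVec, hfw, add_vecMulVec, add_assoc,
    add_comm (vecMulVec w f)]

theorem add_right (hf : HasTransvection M v f) (hg : HasTransvection M v g) :
    HasTransvection M v (f + g) := by
  have hfv := hf.dotProduct_eq_zero
  obtain ⟨s, hsM, hs⟩ := hf
  obtain ⟨t, htM, ht⟩ := hg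
  refine ⟨s * t, M.mul_mem hsM htM, ?_⟩
  simp [hs, ht, add_mul, mul_add, vecMulVec_mul_vecMulVec, hfv, vecMulVec_add, add_assoc,
    add_comm (vecMulVec v g)]

theorem neg_left (h : HasTransvection M v f) : HasTransvection M (-v) f := by
  have hfv := h.dotProduct_eq_zero
  obtain ⟨t, htM, ht⟩ := h
  exact ⟨t⁻¹, M.inv_mem htM, by
    rw [coe_inv_of_eq_one_add_vecMulVec hfv ht, neg_vecMulVec, sub_eq_add_neg]⟩

theorem smul_left_iff {c : R} : HasTransvection M (c • v) f ↔ HasTransvection M v (c • f) := by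
  simp only [HasTransvection, smul_vecMulVec, vecMulVec_smul]

theorem conj (h : HasTransvection M v f) {s : Matrix.SpecialLinearGroup n R} (hs : s ∈ M) :
    HasTransvection M ((s : Matrix n n R) *ᵥ v)
      (f ᵥ* ((s⁻¹ : Matrix.SpecialLinearGroup n R) : Matrix n n R)) := by
  obtain ⟨t, htM, ht⟩ := h
  refine ⟨s * t * s⁻¹, M.mul_mem (M.mul_mem hs htM) (M.inv_mem hs), ?_⟩
  rw [Matrix.SpecialLinearGroup.coe_mul, Matrix.SpecialLinearGroup.coe_mul, ht, mul_add, add_mul,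
    mul_one, ← Matrix.SpecialLinearGroup.coe_mul, mul_inv_cancel,
    Matrix.SpecialLinearGroup.coe_one, mul_vecMulVec, vecMulVec_mul]

theorem conj_transvection (hv : HasTransvection M v f) (hw : HasTransvection M w g) :
    HasTransvection M (w + (f ⬝ᵥ w) • v) (g - (g ⬝ᵥ v) • f) := by
  have hfv := hv.dotProduct_eq_zero
  obtain ⟨t, htM, ht⟩ := hv
  have h := hw.conj htM
  rw [coe_inv_of_eq_one_add_vecMulVec hfv ht, ht] at h
  simpa [add_mulVec, vecMul_sub, vecMulVec_mulVec, vecMul_vecMulVec] using h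

/-- The centers, together with `0`, of the transvections in `M` with fixed axis `ker f`. -/
def centers (M : Subgroup (Matrix.SpecialLinearGroup n R)) (f : n → R) : AddSubgroup (n → R) where
  carrier := {v | HasTransvection M v f}
  zero_mem' := .zero_left M f
  add_mem' := .add_left
  neg_mem' := .neg_left

end HasTransvection

theorem diag2n_eq_mul_transvection {i j : n} (hij : i ≠ j) {c : F} (hc : c ≠ 0) :
    Matrix.SpecialLinearGroup.diag2n hij c hc =
      (.transvection hij c * .transvection hij.symm (-c⁻¹) * .transvection hij c) *
      (.transvection hij (-1) * .transvection hij.symm 1 * .transvection hij (-1)) := by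
  apply Subtype.ext
  rw [Matrix.SpecialLinearGroup.diag2n_coe]
  simp only [Matrix.SpecialLinearGroup.coe_mul, Matrix.SpecialLinearGroup.transvection_coe]
  simp only [mul_add, add_mul, one_mul, mul_one, single_mul_single_same, single_mul_single_of_ne,
    ne_eq, hij, hij.symm, not_false_eq_true, add_zero]
  ext k l
  simp only [diagonal_apply, Matrix.add_apply, one_apply, single_apply]
  grind

theorem eq_top_of_forall_hasTransvection [Nontrivial n]
    {M : Subgroup (Matrix.SpecialLinearGroup n F)}
    (h : ∀ v f : n → F, f ⬝ᵥ v = 0 → HasTransvection M v f) : M = ⊤ := by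
  have elementary (i j : n) (hij : i ≠ j) (c : F) : .transvection hij c ∈ M := by
    obtain ⟨t, htM, ht⟩ := h (c • Pi.single i 1) (Pi.single j 1) (by simp [hij])
    convert htM
    apply Subtype.ext
    rw [Matrix.SpecialLinearGroup.transvection_coe, ht, smul_vecMulVec,
      ← single_eq_single_vecMulVec_single, smul_single, smul_eq_mul, mul_one]
  refine (Subgroup.eq_top_iff' M).2 fun g ↦
    Matrix.SpecialLinearGroup.diagonal_transvection_induction' (· ∈ M) g (fun i j hij c hc ↦ ?_)
      elementary fun _ _ ↦ M.mul_mem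
  rw [diag2n_eq_mul_transvection]
  exact M.mul_mem (M.mul_mem (M.mul_mem (elementary ..) (elementary ..)) (elementary ..))
    (M.mul_mem (M.mul_mem (elementary ..) (elementary ..)) (elementary ..))

end Transvection

section AdditiveSubgroups
open Submodule
variable {F U : Type*} [Field F] [AddCommGroup U] [Module F U] {W : AddSubgroup U}

theorem card_le_sq_of_ker_eq_span_singleton [Finite W] {v : U} (hv : v ≠ 0) {g : U →ₗ[F] F}
    (hg : LinearMap.ker g = span F {v}) (hW : ∀ w ∈ W, g w • v ∈ W) :
    Nat.card W ≤ Nat.card (W ⊓ (span F {v}).toAddSubgroup : AddSubgroup U) ^ 2 := by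
  set L : AddSubgroup U := W ⊓ (span F {v}).toAddSubgroup
  let φ : W →+ U := ((g.smulRight v).toAddMonoidHom).comp W.subtype
  have : Finite L := Finite.Set.subset (W : Set U) fun _ h ↦ h.1
  have hker : Nat.card φ.ker ≤ Nat.card L := by
    refine Nat.card_le_card_of_injective (fun w ↦ ⟨w.1, w.1.2, ?_⟩)
      fun _ _ h ↦ Subtype.ext (Subtype.ext (congrArg Subtype.val h :))
    exact hg ▸ LinearMap.mem_ker.2 ((smul_eq_zero_iff_left hv).1 w.2)
  have hrange : φ.range ≤ L := by
    rintro _ ⟨w, rfl⟩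
    exact ⟨hW w w.2, mem_span_singleton.2 ⟨g w, rfl⟩⟩
  calc Nat.card W = Nat.card φ.ker * Nat.card φ.range := by
        rw [← AddSubgroup.index_ker, AddSubgroup.card_mul_index]
    _ ≤ Nat.card L ^ 2 := by
        rw [sq]
        exact Nat.mul_le_mul hker (AddSubgroup.card_le_of_le hrange)

theorem exists_add_eq_of_disjoint_of_card_le_sq {G : Type*} [AddCommGroup G]
    {A B W : AddSubgroup G} [Finite W] (hAW : A ≤ W) (hBW : B ≤ W) (hAB : Disjoint A B)
    (hA : Nat.card W ≤ Nat.card A ^ 2) (hB : Nat.card W ≤ Nat.card B ^ 2) {w : G} (hw : w ∈ W) :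
    ∃ a ∈ A, ∃ b ∈ B, a + b = w := by
  let φ : A × B → W := fun x ↦ ⟨x.1 + x.2, W.add_mem (hAW x.1.2) (hBW x.2.2)⟩
  have hinj : Function.Injective φ := by
    rintro ⟨a, b⟩ ⟨a', b'⟩ h
    have hdiff : (a : G) - a' = b' - b := by
      have := congrArg Subtype.val h
      simp only [φ] at this
      grind
    have hzero : (a : G) - a' = 0 := AddSubgroup.disjoint_def.1 hAB (A.sub_mem a.2 a'.2)
      (hdiff ▸ B.sub_mem b'.2 b.2)
    exact Prod.ext (Subtype.ext (sub_eq_zero.1 hzero))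
      (Subtype.ext (sub_eq_zero.1 (hdiff ▸ hzero)).symm)
  have hcard : Nat.card W ≤ Nat.card (A × B) := by
    rw [Nat.card_prod]
    refine (Nat.pow_le_pow_iff_left two_ne_zero).1 ?_
    calc Nat.card W ^ 2 ≤ Nat.card A ^ 2 * Nat.card B ^ 2 := sq (Nat.card W) ▸ Nat.mul_le_mul hA hB
      _ = (Nat.card A * Nat.card B) ^ 2 := (mul_pow ..).symm
  obtain ⟨⟨a, b⟩, h⟩ := (hinj.bijective_of_nat_card_le hcard).2 ⟨w, hw⟩
  exact ⟨a, a.2, b, b.2, congrArg Subtype.val h⟩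

-- The lines spanned by `u` and `w + u` each contain at least `√|W|` elements of `W`, so every
-- element of `W` is a sum of two such; for `w` itself the summand on the first line is `-u`.
theorem mem_of_linearIndependent_of_forall_smul_mem [Finite W]
    (h : ∀ v : U, v ≠ 0 → ∃ g : U →ₗ[F] F, LinearMap.ker g = span F {v} ∧ ∀ w ∈ W, g w • v ∈ W)
    {w u : U} (hw : w ∈ W) (hwu : LinearIndependent F ![w, u]) : u ∈ W := by
  have hline {v : U} (hv : v ≠ 0) :
      Nat.card W ≤ Nat.card (W ⊓ (span F {v}).toAddSubgroup : AddSubgroup U) ^ 2 := by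
    obtain ⟨g, hg, hgW⟩ := h v hv
    exact card_le_sq_of_ker_eq_span_singleton hv hg hgW
  have hadd : LinearIndependent F ![u, w + u] :=
    add_comm u w ▸ LinearIndependent.pair_add_right_iff.2 (LinearIndependent.pair_symm_iff.1 hwu)
  have hdisj : Disjoint (W ⊓ (span F {u}).toAddSubgroup) (W ⊓ (span F {w + u}).toAddSubgroup) := by
    refine AddSubgroup.disjoint_def.2 fun {x} hx hx' ↦ ?_
    obtain ⟨s, rfl⟩ := mem_span_singleton.1 hx.2
    obtain ⟨t, ht⟩ := mem_span_singleton.1 hx'.2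
    rw [(LinearIndependent.pair_iff.1 hadd s (-t) (by rw [← ht]; module)).1, zero_smul]
  obtain ⟨a, ha, b, hb, hab⟩ := exists_add_eq_of_disjoint_of_card_le_sq inf_le_left
    inf_le_left hdisj (hline (hwu.ne_zero 1)) (hline (hadd.ne_zero 1)) hw
  obtain ⟨s, rfl⟩ := mem_span_singleton.1 ha.2
  obtain ⟨t, rfl⟩ := mem_span_singleton.1 hb.2
  have hst := LinearIndependent.pair_iff.1 hwu (t - 1) (s + t) (by
    rw [← sub_eq_zero.2 hab]; module)
  have hs : s = -1 := by grind
  simpa [hs] using ha.1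

theorem eq_top_of_forall_smul_mem [Finite W] (hU : 1 < Module.finrank F U) (hW : W ≠ ⊥)
    (h : ∀ v : U, v ≠ 0 → ∃ g : U →ₗ[F] F, LinearMap.ker g = span F {v} ∧ ∀ w ∈ W, g w • v ∈ W) :
    W = ⊤ := by
  obtain ⟨w, hw, hw0⟩ := W.bot_or_exists_ne_zero.resolve_left hW
  obtain ⟨v, hwv⟩ := exists_linearIndependent_pair_of_one_lt_finrank hU hw0
  refine (AddSubgroup.eq_top_iff' W).2 fun u ↦ ?_
  by_cases hwu : LinearIndependent F ![w, u]
  · exact mem_of_linearIndependent_of_forall_smul_mem h hw hwu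
  · obtain ⟨a, rfl⟩ : ∃ a : F, a • w = u := by simpa [LinearIndependent.pair_iff' hw0] using hwu
    have hadd : LinearIndependent F ![w, a • w + v] := by simpa using hwv
    exact (W.add_mem_cancel_right (mem_of_linearIndependent_of_forall_smul_mem h hw hwv)).1
      (mem_of_linearIndependent_of_forall_smul_mem h hw hadd)
end AdditiveSubgroups

section Generation
variable {F : Type*} [Field F]

theorem exists_eq_smul_cross {f g x : Fin 3 → F} (hfg : LinearIndependent F ![f, g])
    (hf : f ⬝ᵥ x = 0) (hg : g ⬝ᵥ x = 0) : ∃ c : F, c • (f ⨯₃ g) = x := by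
  have hpar : ¬LinearIndependent F ![f ⨯₃ g, x] := by
    rw [← crossProduct_ne_zero_iff_linearIndependent, cross_cross_eq_smul_sub_smul, hf, hg]
    simp
  simpa [LinearIndependent.pair_iff' (crossProduct_ne_zero_iff_linearIndependent.2 hfg)] using hpar

theorem exists_ne_zero_forall_dotProduct_eq_zero (f g : Fin 3 → F) :
    ∃ x : Fin 3 → F, x ≠ 0 ∧ f ⬝ᵥ x = 0 ∧ g ⬝ᵥ x = 0 := by
  obtain ⟨x, hx, h⟩ := (exists_mulVec_eq_zero_iff (M := of ![f, g, 0])).2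
    (det_eq_zero_of_row_eq_zero 2 fun _ ↦ rfl)
  exact ⟨x, hx, congrFun h 0, congrFun h 1⟩

theorem linearIndependent_pair_or {V : Type*} [AddCommGroup V] [Module F V] {u v w : V}
    (hu : u ≠ 0) (hvw : LinearIndependent F ![v, w]) :
    LinearIndependent F ![u, v] ∨ LinearIndependent F ![u, w] := by
  by_contra! h
  simp only [LinearIndependent.pair_iff' hu, not_forall, not_not] at h
  obtain ⟨⟨a, rfl⟩, b, rfl⟩ := h
  have := LinearIndependent.pair_iff.1 hvw b (-a) (by module)
  have hne := hvw.ne_zero 0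
  simp_all

theorem finrank_ker_dotProductEquiv {f : Fin 3 → F} (hf : f ≠ 0) :
    Module.finrank F (LinearMap.ker (dotProductEquiv F (Fin 3) f)) = 2 := by
  have := Module.Dual.finrank_ker_add_one_of_ne_zero
    ((dotProductEquiv F (Fin 3)).map_ne_zero_iff.2 hf)
  simpa using this

theorem mem_span_pair_of_dotProduct_eq_zero {f g h v : Fin 3 → F} (hv : v ≠ 0)
    (hfg : LinearIndependent F ![f, g]) (hf : f ⬝ᵥ v = 0) (hg : g ⬝ᵥ v = 0) (hh : h ⬝ᵥ v = 0) :
    ∃ a b : F, a • f + b • g = h := by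
  let K := LinearMap.ker (dotProductEquiv F (Fin 3) v)
  have mem {x : Fin 3 → F} (hx : x ⬝ᵥ v = 0) : x ∈ K := by
    rw [LinearMap.mem_ker, dotProductEquiv_apply_apply, dotProduct_comm, hx]
  have hindep : LinearIndependent F ![(⟨f, mem hf⟩ : K), ⟨g, mem hg⟩] :=
    LinearIndependent.of_comp K.subtype (by convert hfg using 1; ext i; fin_cases i <;> rfl)
  have hspan := hindep.span_eq_top_of_card_eq_finrank (by
    rw [finrank_ker_dotProductEquiv hv, Fintype.card_fin])
  have : (⟨h, mem hh⟩ : K) ∈ Submodule.span F (Set.range ![(⟨f, mem hf⟩ : K), ⟨g, mem hg⟩]) :=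
    hspan ▸ Submodule.mem_top
  obtain ⟨b, a, hab⟩ := by simpa [Submodule.mem_span_pair] using this
  exact ⟨a, b, (add_comm _ _).trans hab⟩

open HasTransvection

variable {M : Subgroup SL(3, F)}

theorem exists_injective_hasTransvection {n : Type*} [Fintype n] [DecidableEq n]
    {M : Subgroup (Matrix.SpecialLinearGroup n F)} [MulAction.IsPretransitive M (ℙ F (n → F))]
    {v w : n → F} (hv : v ≠ 0) (hw : w ≠ 0) :
    ∃ A : (n → F) →ₗ[F] (n → F), LinearMap.ker A = ⊥ ∧
      ∀ f, HasTransvection M v f → HasTransvection M w (A f) := by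
  obtain ⟨⟨s, hs⟩, hsv⟩ := MulAction.exists_smul_eq M (Projectivization.mk F v hv) (.mk F w hw)
  obtain ⟨c, hc⟩ := (Projectivization.mk_eq_mk_iff ..).1 hsv.symm
  refine ⟨(c⁻¹ : Fˣ) • vecMulLinear ((s⁻¹ : Matrix.SpecialLinearGroup n F) : Matrix n n F), ?_,
    fun f hf ↦ ?_⟩
  · refine LinearMap.ker_eq_bot'.2 fun f hf ↦ ?_
    rw [LinearMap.smul_apply, smul_eq_zero_iff_eq, vecMulLinear_apply] at hf
    have := congrArg (· ᵥ* (s : Matrix n n F)) hf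
    rwa [vecMul_vecMul, ← Matrix.SpecialLinearGroup.coe_mul, inv_mul_cancel,
      Matrix.SpecialLinearGroup.coe_one, vecMul_one, zero_vecMul] at this
  · rw [← hc]
    refine smul_left_iff.2 ?_
    simpa [Units.smul_def, Subgroup.smul_def, Matrix.SpecialLinearGroup.smul_def] using hf.conj hs

theorem not_linearIndependent_axes_of_forall_parallel
    (hpar : ∀ v f g : Fin 3 → F, v ≠ 0 → HasTransvection M v f → HasTransvection M v g →
      ¬LinearIndependent F ![f, g])
    {v w f g : Fin 3 → F} (hv : v ≠ 0) (hw : w ≠ 0) (hvf : HasTransvection M v f)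
    (hwg : HasTransvection M w g) (hfw : f ⬝ᵥ w = 0) : ¬LinearIndependent F ![f, g] := by
  intro hfg
  by_cases hgv : g ⬝ᵥ v = 0
  · obtain ⟨c, rfl⟩ := exists_eq_smul_cross hfg hvf.dotProduct_eq_zero hgv
    obtain ⟨d, rfl⟩ := exists_eq_smul_cross hfg hfw hwg.dotProduct_eq_zero
    refine hpar (f ⨯₃ g) (c • f) (d • g) (right_ne_zero_of_smul hv) (smul_left_iff.1 hvf)
      (smul_left_iff.1 hwg) ?_
    exact (LinearIndependent.pair_smul_smul_iff (left_ne_zero_of_smul hv).isUnit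
      (left_ne_zero_of_smul hw).isUnit).2 hfg
  · have hconj := hvf.conj_transvection hwg
    rw [hfw, zero_smul, add_zero] at hconj
    refine hpar w _ _ hw hwg hconj ?_
    refine LinearIndependent.pair_iff.2 fun a b hab ↦ ?_
    obtain ⟨h1, h2⟩ := LinearIndependent.pair_iff.1 hfg (-(b * (g ⬝ᵥ v))) (a + b)
      (by rw [← hab]; module)
    simp_all

theorem exists_linearIndependent_axes
    (hM : ∀ v : Fin 3 → F, v ≠ 0 → ∃ f ≠ 0, HasTransvection M v f) :
    ∃ v f g : Fin 3 → F, v ≠ 0 ∧ HasTransvection M v f ∧ HasTransvection M v g ∧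
      LinearIndependent F ![f, g] := by
  by_contra! hpar
  have key := @not_linearIndependent_axes_of_forall_parallel F _ M hpar
  obtain ⟨v, hv⟩ := exists_ne (0 : Fin 3 → F)
  obtain ⟨f, hf, hvf⟩ := hM v hv
  obtain ⟨w, hfw⟩ : ∃ w, f ⬝ᵥ w ≠ 0 := by
    by_contra! h
    exact hf (dotProduct_eq_zero_iff.1 h)
  have hw : w ≠ 0 := by rintro rfl; simp at hfw
  obtain ⟨g, hg, hwg⟩ := hM w hw
  have hfg : LinearIndependent F ![f, g] := by
    rw [LinearIndependent.pair_symm_iff, LinearIndependent.pair_iff' hg]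
    rintro a rfl
    simp [hwg.dotProduct_eq_zero] at hfw
  obtain ⟨x, hx, hfx, hgx⟩ := exists_ne_zero_forall_dotProduct_eq_zero f g
  obtain ⟨h, hh, hxh⟩ := hM x hx
  rcases linearIndependent_pair_or hh hfg with hhf | hhg
  · exact key hv hx hvf hxh hfx (LinearIndependent.pair_symm_iff.1 hhf)
  · exact key hw hx hwg hxh hgx (LinearIndependent.pair_symm_iff.1 hhg)

theorem hasTransvection_of_dotProduct_eq_zero [Finite F]
    (hM : ∀ v f : Fin 3 → F, v ≠ 0 → f ≠ 0 →
      ∃ g, HasTransvection M v g ∧ LinearIndependent F ![f, g])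
    {v w f : Fin 3 → F} (hv : v ≠ 0) (hf : f ≠ 0) (hvf : HasTransvection M v f)
    (hfw : f ⬝ᵥ w = 0) : HasTransvection M w f := by
  let K := LinearMap.ker (dotProductEquiv F (Fin 3) f)
  let W : AddSubgroup K := (centers M f).comap K.subtype.toAddMonoidHom
  suffices hW : W = ⊤ from (hW ▸ AddSubgroup.mem_top _ : ⟨w, hfw⟩ ∈ W)
  refine eq_top_of_forall_smul_mem (F := F) (by simp [K, finrank_ker_dotProductEquiv hf]) ?_ ?_
  · intro hbot
    have hmem : (⟨v, hvf.dotProduct_eq_zero⟩ : K) ∈ W := hvf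
    rw [hbot, AddSubgroup.mem_bot] at hmem
    exact hv (congrArg Subtype.val hmem)
  rintro ⟨u, hfu⟩ hu
  replace hu : u ≠ 0 := fun h ↦ hu (Subtype.ext h)
  obtain ⟨g, hug, hfg⟩ := hM u f hu hf
  refine ⟨dotProductEquiv F (Fin 3) g ∘ₗ K.subtype, ?_, ?_⟩
  · ext ⟨x, hfx⟩
    rw [LinearMap.mem_ker, Submodule.mem_span_singleton]
    constructor
    · intro hgx
      obtain ⟨c, rfl⟩ := exists_eq_smul_cross hfg hfu hug.dotProduct_eq_zero
      obtain ⟨d, rfl⟩ := exists_eq_smul_cross hfg hfx hgx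
      exact ⟨d * c⁻¹, Subtype.ext (by simp [smul_smul, left_ne_zero_of_smul hu])⟩
    · rintro ⟨c, hc⟩
      obtain rfl := congrArg Subtype.val hc
      simp [hug.dotProduct_eq_zero]
  · rintro ⟨x, hfx⟩ hx
    have hx : HasTransvection M x f := hx
    have h := hug.conj_transvection hx
    rw [show f ⬝ᵥ u = 0 from hfu, zero_smul, sub_zero] at h
    change HasTransvection M ((g ⬝ᵥ x) • u) f
    simpa using h.add_left hx.neg_left

theorem eq_top_of_isPretransitive [Finite F] [MulAction.IsPretransitive M (ℙ F (Fin 3 → F))]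
    {v f : Fin 3 → F} (hv : v ≠ 0) (hf : f ≠ 0) (hvf : HasTransvection M v f) : M = ⊤ := by
  have haxis (w : Fin 3 → F) (hw : w ≠ 0) : ∃ g ≠ 0, HasTransvection M w g := by
    obtain ⟨A, hA, h⟩ := exists_injective_hasTransvection (M := M) hv hw
    exact ⟨A f, fun h0 ↦ hf ((LinearMap.ker_eq_bot'.1 hA) f h0), h f hvf⟩
  obtain ⟨v₀, f₀, g₀, hv₀, hf₀, hg₀, hfg₀⟩ := exists_linearIndependent_axes haxis
  have hpair (w : Fin 3 → F) (hw : w ≠ 0) : ∃ f g, HasTransvection M w f ∧ HasTransvection M w g ∧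
      LinearIndependent F ![f, g] := by
    obtain ⟨A, hA, h⟩ := exists_injective_hasTransvection (M := M) hv₀ hw
    have hfg := hfg₀.map' A hA
    rw [← FinVec.map_eq] at hfg
    exact ⟨A f₀, A g₀, h _ hf₀, h _ hg₀, hfg⟩
  have hker {v w f : Fin 3 → F} : v ≠ 0 → f ≠ 0 → HasTransvection M v f → f ⬝ᵥ w = 0 →
      HasTransvection M w f := by
    refine hasTransvection_of_dotProduct_eq_zero fun w h hw hh ↦ ?_
    obtain ⟨f, g, hf, hg, hfg⟩ := hpair w hw
    rcases linearIndependent_pair_or hh hfg with h | h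
    exacts [⟨f, hf, h⟩, ⟨g, hg, h⟩]
  have hsmul {w g : Fin 3 → F} (hw : w ≠ 0) (hg : g ≠ 0) (h : HasTransvection M w g) (c : F) :
      HasTransvection M w (c • g) :=
    smul_left_iff.1 (hker hw hg h (by rw [dotProduct_smul, h.dotProduct_eq_zero, smul_zero]))
  refine eq_top_of_forall_hasTransvection fun w h hwh ↦ ?_
  rcases eq_or_ne w 0 with rfl | hw
  · exact .zero_left M h
  obtain ⟨f, g, hf, hg, hfg⟩ := hpair w hw
  obtain ⟨a, b, rfl⟩ := mem_span_pair_of_dotProduct_eq_zero hw hfg hf.dotProduct_eq_zero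
    hg.dotProduct_eq_zero hwh
  exact (hsmul hw (hfg.ne_zero 0) hf a).add_right (hsmul hw (hfg.ne_zero 1) hg b)

end Generation

section GroupTheory
variable {G X : Type*} [Group G] [MulAction G X]

/-- Elements whose centralizer is abelian. This property is invariant under automorphisms, and in
`PSL₃` it separates regular unipotent elements from transvections. -/
def HasAbelianCentralizer (x : G) : Prop :=
  ∀ ⦃a b : G⦄, Commute a x → Commute b x → Commute a b

theorem HasAbelianCentralizer.of_map {x : G} (φ : G ≃* G) (h : HasAbelianCentralizer (φ x)) :
    HasAbelianCentralizer x := fun a b ha hb ↦ by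
  have := h (ha.map φ) (hb.map φ)
  exact φ.injective (by simpa only [map_mul] using this.eq)

/-- The subgroups that form a one-element weak normal covering, except that properness is not
required: every element of `G` has an image in `L` under some automorphism. -/
def MeetsEveryAutClass (L : Subgroup G) : Prop :=
  ∀ g : G, ∃ φ : G ≃* G, φ g ∈ L

theorem MeetsEveryAutClass.orderOf_dvd_card {L : Subgroup G} (hL : MeetsEveryAutClass L) (g : G) :
    orderOf g ∣ Nat.card L := by
  obtain ⟨φ, hφ⟩ := hL g
  rw [← φ.orderOf_eq, ← Subgroup.orderOf_mk (φ g) hφ]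
  exact orderOf_dvd_natCard _

theorem MeetsEveryAutClass.orderOf_dvd_card_comap_mk' {N : Subgroup G} [N.Normal]
    {L : Subgroup (G ⧸ N)} (hL : MeetsEveryAutClass L) (g : G ⧸ N) :
    orderOf g ∣ Nat.card (L.comap (QuotientGroup.mk' N)) := by
  have h := Subgroup.card_map_dvd (L.comap (QuotientGroup.mk' N)) (QuotientGroup.mk' N)
  rw [Subgroup.map_comap_eq_self_of_surjective (QuotientGroup.mk'_surjective N)] at h
  exact (hL.orderOf_dvd_card g).trans h

theorem dvd_card_orbit_of_coprime_card_stabilizer (M : Subgroup G) (x : X) {n : ℕ}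
    (hn : n ∣ Nat.card M) (hx : n.Coprime (Nat.card (MulAction.stabilizer G x))) :
    n ∣ Nat.card (MulAction.orbit M x) := by
  have hstab : Nat.card (MulAction.stabilizer M x) ∣ Nat.card (MulAction.stabilizer G x) :=
    Subgroup.card_comap_dvd_of_injective (MulAction.stabilizer G x) M.subtype M.subtype_injective
  rw [← (MulAction.stabilizer M x).card_mul_index, MulAction.index_stabilizer] at hn
  exact (hx.coprime_dvd_right hstab).dvd_of_dvd_mul_left hn

-- The orbit has size `n` or `2 * n`, neither of which is divisible by `l`.
theorem exists_mem_orbit_smul_eq {n l : ℕ} {x : X} [Finite (MulAction.orbit G x)]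
    (hn : n ∣ Nat.card (MulAction.orbit G x)) (hlt : Nat.card (MulAction.orbit G x) < 3 * n)
    (hl : l.Prime) (hl2 : l ≠ 2) (hln : ¬l ∣ n) {g : G} (hg : g ^ l = 1) :
    ∃ a ∈ MulAction.orbit G x, g • a = a := by
  have := Fintype.ofFinite (MulAction.orbit G x)
  have := Fact.mk hl
  have hndvd : ¬l ∣ Fintype.card (MulAction.orbit G x) := by
    rw [← Nat.card_eq_fintype_card]
    obtain ⟨k, hk⟩ := hn
    have := (MulAction.nonempty_orbit (M := G) x).to_subtype
    have hpos : 0 < Nat.card (MulAction.orbit G x) := Nat.card_pos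
    have hk3 : k < 3 := by nlinarith
    have hk0 : 0 < k := by rw [hk] at hpos; exact Nat.pos_of_mul_pos_left hpos
    rw [hk, hl.dvd_mul, not_or]
    refine ⟨hln, fun h ↦ hl2 ?_⟩
    have := Nat.le_of_dvd hk0 h
    have := hl.two_le
    lia
  obtain ⟨a, ha⟩ := Equiv.Perm.exists_fixed_point_of_prime (n := 1) hndvd
    (σ := MulAction.toPermHom G (MulAction.orbit G x) g) (by rw [pow_one, ← map_pow, hg, map_one])
  exact ⟨a, a.2, congrArg Subtype.val ha⟩

theorem exists_ne_smul_eq_smul_eq [Finite X] {n l : ℕ}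
    (hn : ∀ x : X, n ∣ Nat.card (MulAction.orbit G x))
    (hX : Nat.card X ≤ 3 * n) (hl : l.Prime) (hl2 : l ≠ 2) (hln : ¬l ∣ n)
    (hG : ¬MulAction.IsPretransitive G X) {g : G} (hg : g ^ l = 1) :
    ∃ a b : X, a ≠ b ∧ g • a = a ∧ g • b = b := by
  obtain ⟨x, y, hxy⟩ : ∃ x y : X, MulAction.orbit G x ≠ MulAction.orbit G y := by
    by_contra! h
    exact hG ⟨fun x y ↦ MulAction.orbit_eq_iff.1 (h y x)⟩
  have hdisj := (MulAction.orbit.eq_or_disjoint x y).resolve_left hxy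
  have hfix {z : X} (hz : MulAction.orbit G z ≠ Set.univ) : ∃ a ∈ MulAction.orbit G z, g • a = a :=
    exists_mem_orbit_smul_eq (hn z) ((Set.ncard_lt_card hz).trans_le hX) hl hl2 hln hg
  have hne {s t : Set X} (hst : Disjoint s t) (ht : t.Nonempty) : s ≠ Set.univ := by
    rintro rfl
    exact ht.ne_empty (Set.univ_disjoint.1 hst)
  obtain ⟨a, hax, ha⟩ := hfix (hne hdisj ⟨y, MulAction.mem_orbit_self y⟩)
  obtain ⟨b, hby, hb⟩ := hfix (hne hdisj.symm ⟨x, MulAction.mem_orbit_self x⟩)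
  exact ⟨a, b, fun hab ↦ Set.disjoint_left.1 hdisj hax (hab ▸ hby), ha, hb⟩

end GroupTheory

section UnipotentCentralizers
variable {F : Type*} [Field F]

-- Conjugating `N` by `a` exhibits `1 - z` as a sum of commuting nilpotents, whence `z = 1`.
theorem commute_of_one_add_mul_eq_smul {A : Type*} [Ring A] [Algebra F A] {N a : A} {z : F}
    (hN : IsNilpotent N) (ha : IsUnit a) (h : (1 + N) * a = z • (a * (1 + N))) : Commute N a := by
  cases subsingleton_or_nontrivial A
  · exact Subsingleton.elim _ _
  obtain ⟨a, rfl⟩ := ha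
  have hconj : algebraMap F A (1 - z) + N = z • (a * N * ↑a⁻¹) := by
    have h' : 1 + N = z • (a * (1 + N)) * ↑a⁻¹ := (Units.eq_mul_inv_iff_mul_eq a).2 h
    rw [smul_mul_assoc, mul_add, add_mul, mul_one, Units.mul_inv, smul_add] at h'
    rw [map_sub, map_one, sub_add_eq_add_sub, h', Algebra.algebraMap_eq_smul_one,
      add_sub_cancel_left]
  have hnil : IsNilpotent (z • ((a : A) * N * ↑a⁻¹)) :=
    (hN.map (MulSemiringAction.toRingHom (ConjAct Aˣ) A (ConjAct.toConjAct a))).smul z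
  have hz : IsNilpotent (algebraMap F A (1 - z)) := by
    rw [← hconj] at hnil
    simpa using (Algebra.commute_algebraMap_left _ N |>.add_left rfl).isNilpotent_sub hnil hN
  obtain rfl : 1 = z :=
    sub_eq_zero.1 ((IsNilpotent.map_iff (algebraMap F A).injective).1 hz).eq_zero
  simpa [add_mul, mul_add, commute_iff_eq] using h

theorem commute_of_surjective_aeval {V : Type*} [AddCommGroup V] [Module F V]
    {N a b : Module.End F V} {v : V} (hv : Function.Surjective fun p : F[X] ↦ aeval N p v)
    (ha : Commute a N) (hb : Commute b N) : Commute a b := by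
  have eq_aeval {c : Module.End F V} (hc : Commute c N) : ∃ p : F[X], aeval N p = c := by
    obtain ⟨p, hp⟩ := hv (c v)
    replace hp : aeval N p v = c v := hp
    refine ⟨p, LinearMap.ext fun x ↦ ?_⟩
    obtain ⟨r, rfl⟩ := hv x
    have hcr : Commute c (aeval N r) :=
      Algebra.commute_of_mem_adjoin_singleton_of_commute (aeval_mem_adjoin_singleton F N) hc
    calc aeval N p (aeval N r v) = aeval N r (aeval N p v) := by
          rw [← Module.End.mul_apply, ← map_mul, mul_comm, map_mul, Module.End.mul_apply]
      _ = c (aeval N r v) := by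
        rw [hp, ← Module.End.mul_apply, ← Module.End.mul_apply, hcr.eq]
  obtain ⟨p, rfl⟩ := eq_aeval ha
  obtain ⟨r, rfl⟩ := eq_aeval hb
  exact (Commute.all p r).map (aeval N)

theorem exists_surjective_aeval {V : Type*} [AddCommGroup V] [Module F V] [Module.Finite F V]
    {N : Module.End F V} {d : ℕ} (hd : Module.finrank F V = d + 1) (hN : N ^ (d + 1) = 0)
    (hN' : N ^ d ≠ 0) : ∃ v : V, Function.Surjective fun p : F[X] ↦ aeval N p v := by
  obtain ⟨v, hv⟩ : ∃ v, (N ^ d) v ≠ 0 := by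
    contrapose! hN'
    exact LinearMap.ext hN'
  let φ : degreeLT F (d + 1) →ₗ[F] V :=
    (LinearMap.applyₗ v) ∘ₗ (aeval N).toLinearMap ∘ₗ (degreeLT F (d + 1)).subtype
  suffices hφ : Function.Surjective φ from
    ⟨v, fun x ↦ (hφ x).imp' Subtype.val fun _ ↦ id⟩
  have hfin : Module.finrank F (degreeLT F (d + 1)) = Module.finrank F V := by
    rw [hd, (degreeLTEquiv F (d + 1)).finrank_eq, Module.finrank_fin_fun]
  have : Module.Finite F (degreeLT F (d + 1)) := .equiv (degreeLTEquiv F (d + 1)).symm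
  refine (LinearMap.injective_iff_surjective_of_finrank_eq_finrank hfin).1
    ((injective_iff_map_eq_zero φ).2 ?_)
  rintro ⟨p, hp⟩ hpv
  replace hpv : aeval N p v = 0 := hpv
  by_contra hp0
  replace hp0 : p ≠ 0 := fun h ↦ hp0 (Subtype.ext h)
  classical
  set g := EuclideanDomain.gcd p (X ^ (d + 1)) with hg
  have hgv : aeval N g v = 0 := by
    rw [hg, EuclideanDomain.gcd_eq_gcd_ab, mul_comm p]
    simp [hpv, hN]
  obtain ⟨k, -, hk⟩ := (dvd_prime_pow prime_X _).1 (EuclideanDomain.gcd_dvd_right p (X ^ (d + 1)))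
  have hkd : k ≤ d := by
    have := degree_le_of_dvd (hk.symm.dvd.trans (EuclideanDomain.gcd_dvd_left p _)) hp0
    rw [degree_X_pow] at this
    exact Nat.lt_succ_iff.1 (Nat.cast_lt.1 (this.trans_lt (mem_degreeLT.1 hp)))
  obtain ⟨r, hr⟩ := hk.dvd.trans (pow_dvd_pow X hkd)
  refine hv ?_
  rw [← aeval_X_pow (R := F), hr, mul_comm, map_mul, Module.End.mul_apply, hgv, map_zero]

end UnipotentCentralizers

section RankOne
variable {F : Type*} [Field F]

theorem exists_mem_mem_linearIndependent_pair {V : Type*} [AddCommGroup V] [Module F V]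
    {K : Submodule F V} (hK : 1 < Module.finrank F K) :
    ∃ u ∈ K, ∃ w ∈ K, LinearIndependent F ![u, w] := by
  have : Nontrivial K := Module.nontrivial_of_finrank_pos (R := F) (by lia)
  obtain ⟨u, hu⟩ := exists_ne (0 : K)
  obtain ⟨w, huw⟩ := exists_linearIndependent_pair_of_one_lt_finrank hK hu
  refine ⟨u, u.2, w, w.2, ?_⟩
  have := huw.map' K.subtype K.ker_subtype
  rwa [← FinVec.map_eq] at this

theorem exists_eq_vecMulVec_cross {N : Matrix (Fin 3) (Fin 3) F} {u w : Fin 3 → F}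
    (huw : LinearIndependent F ![u, w]) (hu : N *ᵥ u = 0) (hw : N *ᵥ w = 0) :
    ∃ a, N = vecMulVec a (u ⨯₃ w) := by
  have hrow (i : Fin 3) : ∃ c : F, c • (u ⨯₃ w) = N i :=
    exists_eq_smul_cross huw
      ((dotProduct_comm ..).trans (congrFun hu i)) ((dotProduct_comm ..).trans (congrFun hw i))
  choose a ha using hrow
  exact ⟨a, funext fun i ↦ (ha i).symm⟩

theorem exists_eq_vecMulVec_of_sq_eq_zero {N : Matrix (Fin 3) (Fin 3) F} (hN : N ^ 2 = 0) :
    ∃ a f, N = vecMulVec a f := by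
  let K := LinearMap.ker N.mulVecLin
  have hle : LinearMap.range N.mulVecLin ≤ K := by
    rw [LinearMap.range_le_ker_iff, ← mulVecLin_mul, ← pow_two, hN, mulVecLin_zero]
  have hK : 1 < Module.finrank F K := by
    have h := N.mulVecLin.finrank_range_add_finrank_ker
    rw [Module.finrank_fin_fun] at h
    have := Submodule.finrank_mono hle
    change _ + Module.finrank F K = 3 at h
    lia
  obtain ⟨u, hu, w, hw, huw⟩ := exists_mem_mem_linearIndependent_pair hK
  obtain ⟨a, ha⟩ := exists_eq_vecMulVec_cross huw hu hw
  exact ⟨a, _, ha⟩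

theorem exists_dotProduct_eq_zero_linearIndependent {v f : Fin 3 → F} (hv : v ≠ 0) (hf : f ≠ 0) :
    ∃ w, f ⬝ᵥ w = 0 ∧ LinearIndependent F ![v, w] := by
  let K := LinearMap.ker (dotProductEquiv F (Fin 3) f)
  have hK : 1 < Module.finrank F K := by rw [finrank_ker_dotProductEquiv hf]; exact one_lt_two
  obtain ⟨u, hu, w, hw, huw⟩ := exists_mem_mem_linearIndependent_pair hK
  exact (linearIndependent_pair_or hv huw).elim (⟨u, hu, ·⟩) (⟨w, hw, ·⟩)

theorem commute_of_eq_one_add_vecMulVec {n R : Type*} [Fintype n] [DecidableEq n] [CommRing R]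
    {s t : Matrix.SpecialLinearGroup n R} {v w f g : n → R}
    (hs : (s : Matrix n n R) = 1 + vecMulVec v f) (ht : (t : Matrix n n R) = 1 + vecMulVec w g)
    (hfw : f ⬝ᵥ w = 0) (hgv : g ⬝ᵥ v = 0) : Commute s t := Subtype.ext (by
  simp only [Matrix.SpecialLinearGroup.coe_mul, hs, ht, add_mul, mul_add, one_mul, mul_one,
    vecMulVec_mul_vecMulVec, hfw, hgv, zero_smul, vecMulVec_zero]
  abel)

theorem pow_card_eq_zero_of_isNilpotent {n : Type*} [Fintype n] [DecidableEq n]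
    {N : Matrix n n F} (hN : IsNilpotent N) : N ^ Fintype.card n = 0 := by
  have h := (Matrix.isNilpotent_charpoly_sub_pow_of_isNilpotent hN).eq_zero
  have := N.aeval_self_charpoly
  rwa [sub_eq_zero.1 h, map_pow, aeval_X] at this

end RankOne

section ProjSL
variable {F : Type*} [Field F] {d : ℕ}

theorem ProjSL.coe_eq_coe_iff {a b : SL(d, F)} :
    (a : ProjSL d F) = b ↔
      ∃ z : F, z ^ d = 1 ∧ (b : Matrix (Fin d) (Fin d) F) = z • (a : Matrix _ _ F) := by
  rw [QuotientGroup.eq, Matrix.SpecialLinearGroup.mem_center_iff, Fintype.card_fin]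
  refine exists_congr fun z ↦ and_congr_right fun _ ↦ ?_
  rw [Matrix.SpecialLinearGroup.coe_mul,
    show scalar (Fin d) z = z • 1 from (smul_one_eq_diagonal z).symm]
  constructor
  · intro h
    calc (b : Matrix (Fin d) (Fin d) F) = a * ((a⁻¹ : SL(d, F)) * b) := by
          rw [← mul_assoc, ← Matrix.SpecialLinearGroup.coe_mul, mul_inv_cancel,
            Matrix.SpecialLinearGroup.coe_one, one_mul]
      _ = z • (a : Matrix _ _ F) := by rw [← h, mul_smul_comm, mul_one]
  · intro h
    rw [h, mul_smul_comm, ← Matrix.SpecialLinearGroup.coe_mul, inv_mul_cancel,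
      Matrix.SpecialLinearGroup.coe_one]

theorem ProjSL.exists_mul_eq_smul_of_commute {a b : SL(d, F)} (h : Commute (a : ProjSL d F) b) :
    ∃ z : F, (a * b : Matrix (Fin d) (Fin d) F) = z • (b * a : Matrix (Fin d) (Fin d) F) := by
  obtain ⟨z, -, hz⟩ := ProjSL.coe_eq_coe_iff (a := b * a) (b := a * b).1 h.symm.eq
  exact ⟨z, hz⟩

theorem coprime_card_sub_one_of_charP (F : Type*) [Field F] [Fintype F] (p : ℕ) [CharP F p] :
    p.Coprime (Fintype.card F - 1) := by
  obtain ⟨n, -, hn⟩ := FiniteField.card F p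
  have h := (Nat.coprime_self_sub_right (Nat.one_le_of_lt Fintype.one_lt_card)).2
    (Nat.coprime_one_right (Fintype.card F))
  nth_rewrite 1 [hn] at h
  exact (Nat.coprime_pow_left_iff n.pos ..).1 h

theorem eq_one_of_pow_eq_one_of_coprime [Fintype F] {l : ℕ} (hl : l.Coprime (Fintype.card F - 1))
    {z : F} (hz : z ^ l = 1) (hz0 : z ≠ 0) : z = 1 :=
  (pow_eq_one_iff_of_coprime hl).1 ⟨hz, FiniteField.pow_card_sub_one_eq_one z hz0⟩

theorem ProjSL.eq_one_of_coe_eq_one [NeZero d] [Fintype F] {l : ℕ}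
    (hl : l.Coprime (Fintype.card F - 1)) {y : SL(d, F)} (hy : y ^ l = 1)
    (h : (y : ProjSL d F) = 1) : y = 1 := by
  obtain ⟨z, hzd, hz⟩ := ProjSL.coe_eq_coe_iff (a := 1).1 h.symm
  rw [Matrix.SpecialLinearGroup.coe_one] at hz
  have hz0 : z ≠ 0 := (IsUnit.of_pow_eq_one hzd (NeZero.ne d)).ne_zero
  have hzl : z ^ l = 1 := by
    have hyl := congrArg Subtype.val hy
    rw [Matrix.SpecialLinearGroup.coe_pow, hz, _root_.smul_pow, one_pow] at hyl
    simpa using congrFun₂ hyl 0 0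
  exact Subtype.ext (by
    rw [hz, eq_one_of_pow_eq_one_of_coprime hl hzl hz0, one_smul,
      Matrix.SpecialLinearGroup.coe_one])

theorem ProjSL.commute_of_isNilpotent {N : Matrix (Fin d) (Fin d) F} {y a : SL(d, F)}
    (hy : (y : Matrix _ _ F) = 1 + N) (hN : IsNilpotent N) (h : Commute (a : ProjSL d F) y) :
    Commute N a := by
  obtain ⟨z, hz⟩ := ProjSL.exists_mul_eq_smul_of_commute h.symm
  exact commute_of_one_add_mul_eq_smul hN (Matrix.isUnit_iff_isUnit_det _ |>.2 (by simp)) (hy ▸ hz)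

theorem ProjSL.hasAbelianCentralizer {N : Matrix (Fin (d + 1)) (Fin (d + 1)) F} {y : SL(d + 1, F)}
    (hy : (y : Matrix _ _ F) = 1 + N) (hN : N ^ (d + 1) = 0) (hN' : N ^ d ≠ 0) :
    HasAbelianCentralizer (y : ProjSL (d + 1) F) := by
  let e := Matrix.toLinAlgEquiv' (R := F) (n := Fin (d + 1))
  obtain ⟨v, hv⟩ := exists_surjective_aeval (N := e N) (d := d) (Module.finrank_fin_fun F)
    (by rw [← map_pow, hN, map_zero]) (by rwa [← map_pow, map_ne_zero_iff e e.injective])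
  intro a b ha hb
  obtain ⟨a, rfl⟩ := QuotientGroup.mk_surjective a
  obtain ⟨b, rfl⟩ := QuotientGroup.mk_surjective b
  have comm {c : SL(d + 1, F)} (hc : Commute (c : ProjSL (d + 1) F) y) : Commute (e c) (e N) :=
    (ProjSL.commute_of_isNilpotent hy ⟨_, hN⟩ hc).symm.map e
  have := commute_of_surjective_aeval hv (comm ha) (comm hb)
  have hab : Commute a b := Subtype.ext (e.injective (by simpa using this.eq))
  exact hab.map (QuotientGroup.mk' _)

theorem ProjSL.not_hasAbelianCentralizer {v f : Fin 3 → F} (hv : v ≠ 0) (hf : f ≠ 0)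
    {y : SL(3, F)} (hy : (y : Matrix (Fin 3) (Fin 3) F) = 1 + vecMulVec v f) :
    ¬HasAbelianCentralizer (y : ProjSL 3 F) := by
  have hfv : f ⬝ᵥ v = 0 := HasTransvection.dotProduct_eq_zero ⟨y, Subgroup.mem_top y, hy⟩
  obtain ⟨w, hfw, hvw⟩ := exists_dotProduct_eq_zero_linearIndependent hv hf
  obtain ⟨g, hvg, hfg⟩ := exists_dotProduct_eq_zero_linearIndependent hf hv
  rw [dotProduct_comm] at hvg
  obtain ⟨a, ha⟩ := exists_coe_eq_one_add_vecMulVec hvg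
  obtain ⟨b, hb⟩ := exists_coe_eq_one_add_vecMulVec hfw
  have hay : Commute a y := commute_of_eq_one_add_vecMulVec ha hy hvg hfv
  have hby : Commute b y := commute_of_eq_one_add_vecMulVec hb hy hfv hfw
  intro h
  have hgw : g ⬝ᵥ w = 0 := by
    have hnil : IsNilpotent (vecMulVec v g) :=
      ⟨2, by rw [pow_two, vecMulVec_mul_vecMulVec, hvg, zero_smul, vecMulVec_zero]⟩
    have := ProjSL.commute_of_isNilpotent ha hnil
      (h (hay.map (QuotientGroup.mk' _)) (hby.map (QuotientGroup.mk' _))).symm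
    simpa [commute_iff_eq, hb, mul_add, add_mul, vecMulVec_mul_vecMulVec, hfv, hv, hf] using this
  obtain ⟨c, hc⟩ := exists_eq_smul_cross hfg hfv hvg
  obtain ⟨c', hc'⟩ := exists_eq_smul_cross hfg hfw hgw
  obtain ⟨s, t, hs, ht⟩ : ∃ s t : F, s • v + t • w = 0 ∧ ¬(s = 0 ∧ t = 0) := by
    refine ⟨c', -c, by rw [← hc, ← hc']; module, fun ⟨_, h2⟩ ↦ hv ?_⟩
    rw [← hc, neg_eq_zero.1 h2, zero_smul]
  exact ht (LinearIndependent.pair_iff.1 hvw s t hs)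

theorem ProjSL.exists_coe_eq_pow_eq_one [NeZero d] [Finite F] {p : ℕ} [Fact p.Prime] [CharP F p]
    {x : ProjSL d F} (hx : x ^ p = 1) : ∃ y : SL(d, F), (y : ProjSL d F) = x ∧ y ^ p = 1 := by
  obtain ⟨x, rfl⟩ := QuotientGroup.mk_surjective x
  obtain ⟨z, hz, hxz⟩ := ProjSL.coe_eq_coe_iff (a := 1) (b := x ^ p).1 hx.symm
  obtain ⟨m, rfl⟩ := surjective_frobenius F p z
  rw [frobenius_def] at hz hxz
  have hm : m ^ d = 1 := frobenius_inj F p (by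
    rw [frobenius_def, ← pow_mul, mul_comm, pow_mul, hz, map_one])
  have hm0 : m ≠ 0 := (IsUnit.of_pow_eq_one hm (NeZero.ne d)).ne_zero
  have hm' : (m⁻¹) ^ d = 1 := by rw [inv_pow, hm, inv_one]
  let y : SL(d, F) := ⟨m⁻¹ • (x : Matrix _ _ F), by simp [hm']⟩
  refine ⟨y, (ProjSL.coe_eq_coe_iff.2 ⟨m⁻¹, hm', rfl⟩).symm, Subtype.ext ?_⟩
  rw [Matrix.SpecialLinearGroup.coe_pow] at hxz ⊢
  calc (m⁻¹ • (x : Matrix (Fin d) (Fin d) F)) ^ p = (m⁻¹ ^ p * m ^ p) • (1 : SL(d, F)) := by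
        rw [_root_.smul_pow, hxz, smul_smul]
    _ = (1 : SL(d, F)) := by rw [← mul_pow, inv_mul_cancel₀ hm0, one_pow, one_smul]

theorem pow_char_eq_one_iff {p : ℕ} [Fact p.Prime] [CharP F p] {y : SL(d, F)}
    {N : Matrix (Fin d) (Fin d) F} (hy : (y : Matrix _ _ F) = 1 + N) : y ^ p = 1 ↔ N ^ p = 0 := by
  refine Subtype.ext_iff.trans ?_
  rw [Matrix.SpecialLinearGroup.coe_pow, hy, Matrix.SpecialLinearGroup.coe_one]
  cases isEmpty_or_nonempty (Fin d)
  · simp [Subsingleton.elim _ (0 : Matrix (Fin d) (Fin d) F)]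
  · rw [add_pow_char_of_commute p (Commute.one_left N), one_pow, add_eq_left]

theorem pow_char_eq_one_of_eq_one_add_vecMulVec {p : ℕ} [Fact p.Prime] [CharP F p] {y : SL(d, F)}
    {v f : Fin d → F} (hy : (y : Matrix _ _ F) = 1 + vecMulVec v f) : y ^ p = 1 := by
  have hvf : HasTransvection ⊤ v f := ⟨y, Subgroup.mem_top y, hy⟩
  refine (pow_char_eq_one_iff hy).2 (pow_eq_zero_of_le (Fact.out : p.Prime).two_le ?_)
  rw [pow_two, vecMulVec_mul_vecMulVec,
    hvf.dotProduct_eq_zero, zero_smul, vecMulVec_zero]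

theorem ProjSL.exists_lift_eq_one_add_vecMulVec [Finite F] {p : ℕ} [Fact p.Prime] [CharP F p]
    {x : ProjSL 3 F} (hxp : x ^ p = 1) (hx1 : x ≠ 1) (hx : ¬HasAbelianCentralizer x) :
    ∃ (y : SL(3, F)) (v f : Fin 3 → F), (y : ProjSL 3 F) = x ∧ v ≠ 0 ∧ f ≠ 0 ∧
      (y : Matrix (Fin 3) (Fin 3) F) = 1 + vecMulVec v f := by
  obtain ⟨y, rfl, hyp⟩ := ProjSL.exists_coe_eq_pow_eq_one hxp
  obtain ⟨N, hN⟩ : ∃ N, (y : Matrix (Fin 3) (Fin 3) F) = 1 + N := ⟨_, (add_sub_cancel _ _).symm⟩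
  have hN3 : N ^ 3 = 0 :=
    pow_card_eq_zero_of_isNilpotent ⟨p, (pow_char_eq_one_iff hN).1 hyp⟩
  have hN2 : N ^ 2 = 0 :=
    by_contra fun hN2 ↦ hx (ProjSL.hasAbelianCentralizer hN hN3 hN2)
  obtain ⟨v, f, rfl⟩ := exists_eq_vecMulVec_of_sq_eq_zero hN2
  have hvf : vecMulVec v f ≠ 0 := by
    intro h
    obtain rfl : y = 1 := Subtype.ext (by rw [hN, h, add_zero, Matrix.SpecialLinearGroup.coe_one])
    exact hx1 rfl
  rw [Ne, vecMulVec_eq_zero, not_or] at hvf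
  exact ⟨y, v, f, rfl, hvf.1, hvf.2, hN⟩

theorem ProjSL.exists_hasTransvection [Finite F] {L : Subgroup (ProjSL 3 F)}
    (hL : MeetsEveryAutClass L) :
    ∃ v f : Fin 3 → F, v ≠ 0 ∧ f ≠ 0 ∧
      HasTransvection (L.comap (QuotientGroup.mk' (Subgroup.center _))) v f := by
  have := Fintype.ofFinite F
  obtain ⟨p, _, -, hp, -⟩ := FiniteField.card' F
  have := Fact.mk hp
  obtain ⟨v, hv⟩ := exists_ne (0 : Fin 3 → F)
  obtain ⟨f, hf, hvf, -⟩ := exists_ne_zero_forall_dotProduct_eq_zero v v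
  obtain ⟨t, ht⟩ := exists_coe_eq_one_add_vecMulVec ((dotProduct_comm f v).trans hvf)
  obtain ⟨φ, hφ⟩ := hL t
  have htp : t ^ p = 1 := pow_char_eq_one_of_eq_one_add_vecMulVec ht
  have ht1 : (t : ProjSL 3 F) ≠ 1 := by
    intro h
    rw [ProjSL.eq_one_of_coe_eq_one (coprime_card_sub_one_of_charP F p) htp h,
      Matrix.SpecialLinearGroup.coe_one, left_eq_add, vecMulVec_eq_zero] at ht
    exact ht.elim hv hf
  obtain ⟨y, w, g, hy, hw, hg, hyt⟩ := ProjSL.exists_lift_eq_one_add_vecMulVec (p := p)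
    (by rw [← map_pow, ← QuotientGroup.mk_pow, htp, QuotientGroup.mk_one, map_one])
    ((map_ne_one_iff φ φ.injective).2 ht1)
    fun h ↦ ProjSL.not_hasAbelianCentralizer hv hf ht (.of_map φ h)
  exact ⟨w, g, hw, hg, y, show (y : ProjSL 3 F) ∈ L from hy ▸ hφ, hyt⟩

theorem ProjSL.exists_pow_char_eq_one_hasAbelianCentralizer [Finite F] {p : ℕ}
    [Fact p.Prime] [CharP F p] (hp2 : p ≠ 2) :
    ∃ u : ProjSL 3 F, u ^ p = 1 ∧ HasAbelianCentralizer u ∧ u ≠ 1 := by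
  have := Fintype.ofFinite F
  let N : Matrix (Fin 3) (Fin 3) F := !![0, 1, 0; 0, 0, 1; 0, 0, 0]
  have hN2 : N ^ 2 ≠ 0 := fun h ↦ by
    simpa [N, pow_two, Matrix.mul_apply, Fin.sum_univ_three] using congrFun₂ h 0 2
  have hN3 : N ^ 3 = 0 := by
    ext i j
    fin_cases i <;> fin_cases j <;> simp [N, pow_succ, Matrix.mul_apply, Fin.sum_univ_three]
  let u : SL(3, F) := ⟨1 + N, by simp [N, Matrix.det_fin_three]⟩
  have hp3 : 3 ≤ p := (Fact.out : p.Prime).two_le.lt_of_ne' hp2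
  have hup : u ^ p = 1 := (pow_char_eq_one_iff rfl).2 (pow_eq_zero_of_le hp3 hN3)
  refine ⟨u, by rw [← QuotientGroup.mk_pow, hup, QuotientGroup.mk_one],
    ProjSL.hasAbelianCentralizer rfl hN3 hN2, fun h ↦ hN2 ?_⟩
  have hu1 : u = 1 := ProjSL.eq_one_of_coe_eq_one (coprime_card_sub_one_of_charP F p) hup h
  have hN0 : N = 0 := by simpa [u] using congrArg Subtype.val hu1
  rw [hN0, zero_pow two_ne_zero]

end ProjSL

section Singer

/-- The order of the image in `PSL₃(q)` of the norm-one group of `𝔽_{q³}ˣ` (a Singer cycle).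
The division is exact by `singerOrder_mul_gcd`. -/
def singerOrder (q : ℕ) : ℕ := (q ^ 2 + q + 1) / Nat.gcd 3 (q - 1)

theorem singerOrder_mul_gcd {q : ℕ} (hq : 0 < q) :
    singerOrder q * Nat.gcd 3 (q - 1) = q ^ 2 + q + 1 := by
  refine Nat.div_mul_cancel ?_
  obtain ⟨t, rfl⟩ := Nat.exists_eq_add_one.2 hq
  rw [Nat.add_sub_cancel, show (t + 1) ^ 2 + (t + 1) + 1 = t * (t + 3) + 3 by ring]
  exact dvd_add ((Nat.gcd_dvd_right 3 t).mul_right _) (Nat.gcd_dvd_left 3 t)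

theorem sq_add_self_add_one_le_three_mul_singerOrder {q : ℕ} (hq : 0 < q) :
    q ^ 2 + q + 1 ≤ 3 * singerOrder q := by
  rw [← singerOrder_mul_gcd hq, mul_comm]
  exact Nat.mul_le_mul_right _ (Nat.gcd_le_left _ three_pos)

theorem coprime_singerOrder_sub_one {q : ℕ} (hq : 0 < q) : (singerOrder q).Coprime (q - 1) := by
  have h := singerOrder_mul_gcd hq
  obtain ⟨t, rfl⟩ := Nat.exists_eq_add_one.2 hq
  rw [Nat.add_sub_cancel] at h ⊢
  by_cases h3 : 3 ∣ t
  · obtain ⟨m, rfl⟩ := h3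
    rw [Nat.gcd_mul_right_right] at h
    rw [show singerOrder (3 * m + 1) = 3 * m * (m + 1) + 1 by nlinarith]
    simp
  · have h3t : Nat.Coprime 3 t := (Nat.Prime.coprime_iff_not_dvd Nat.prime_three).2 h3
    rw [h3t.gcd_eq_one, mul_one] at h
    rw [h, show (t + 1) ^ 2 + (t + 1) + 1 = t * (t + 3) + 3 by ring]
    simpa using h3t

theorem coprime_singerOrder {q : ℕ} (hq : 0 < q) :
    (singerOrder q).Coprime (q ^ 3 * (q - 1) ^ 3 * (q + 1)) := by
  have hdvd : singerOrder q ∣ q * (q + 1) + 1 :=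
    ⟨_, (by ring : q * (q + 1) + 1 = q ^ 2 + q + 1).trans (singerOrder_mul_gcd hq).symm⟩
  have hcop : (singerOrder q).Coprime (q * (q + 1)) :=
    Nat.Coprime.coprime_dvd_left hdvd (by simp)
  exact ((hcop.coprime_mul_right_right.pow_right 3).mul_right
    ((coprime_singerOrder_sub_one hq).pow_right 3)).mul_right hcop.coprime_mul_left_right

theorem pow_three_sub_one {q : ℕ} (hq : 0 < q) : q ^ 3 - 1 = (q - 1) * (q ^ 2 + q + 1) := by
  obtain ⟨t, rfl⟩ := Nat.exists_eq_add_one.2 hq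
  exact Nat.sub_eq_of_eq_add (by rw [Nat.add_sub_cancel]; ring)

variable {F : Type*} [Field F] [Fintype F]

theorem ProjSL.exists_singerOrder_dvd_orderOf {E : Type*} [Field E] [Algebra F E]
    (b : Module.Basis (Fin 3) F E) :
    ∃ g : ProjSL 3 F, singerOrder (Fintype.card F) ∣ orderOf g := by
  have := Module.Finite.of_basis b
  have := Module.finite_of_finite F (M := E)
  have := Fintype.ofFinite E
  let q := Fintype.card F
  have hq : 0 < q := Fintype.card_pos
  have hq1 : 0 < q - 1 := Nat.sub_pos_of_lt Fintype.one_lt_card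
  obtain ⟨ζ, hζ⟩ := IsCyclic.exists_generator (α := Eˣ)
  have hord : orderOf ζ = (q - 1) * (singerOrder q * Nat.gcd 3 (q - 1)) := by
    rw [orderOf_eq_card_of_forall_mem_zpowers hζ, Nat.card_units, Nat.card_eq_fintype_card,
      Module.card_fintype b, Fintype.card_fin, singerOrder_mul_gcd hq]
    exact pow_three_sub_one hq
  have hdet : (Algebra.leftMulMatrix b ((ζ : E) ^ (q - 1))).det = 1 := by
    rw [← Algebra.norm_eq_matrix_det, map_pow]
    exact FiniteField.pow_card_sub_one_eq_one _ (Algebra.norm_ne_zero_iff.2 ζ.ne_zero)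
  let s : SL(3, F) := ⟨_, hdet⟩
  refine ⟨s, ?_⟩
  obtain ⟨z, hz3, hz⟩ := ProjSL.coe_eq_coe_iff (a := 1) (b := s ^ orderOf (s : ProjSL 3 F)).1
    (by rw [QuotientGroup.mk_pow, pow_orderOf_eq_one, QuotientGroup.mk_one])
  have hζz : (ζ : E) ^ ((q - 1) * orderOf (s : ProjSL 3 F)) = algebraMap F E z := by
    apply Algebra.leftMulMatrix_injective b
    rw [Matrix.SpecialLinearGroup.coe_pow, Matrix.SpecialLinearGroup.coe_one] at hz
    rw [pow_mul, map_pow, AlgHom.commutes, Algebra.algebraMap_eq_smul_one, ← hz]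
  have hzq : z ^ (q - 1) = 1 := FiniteField.pow_card_sub_one_eq_one z
    (IsUnit.of_pow_eq_one hz3 three_ne_zero).ne_zero
  have hdvd : orderOf ζ ∣ (q - 1) * (orderOf (s : ProjSL 3 F) * Nat.gcd 3 (q - 1)) := by
    rw [orderOf_dvd_iff_pow_eq_one, ← Units.val_inj, Units.val_pow_eq_pow_val, ← mul_assoc, pow_mul,
      hζz, ← map_pow, pow_gcd_eq_one.2 ⟨hz3, hzq⟩, map_one, Units.val_one]
  rw [hord] at hdvd
  exact Nat.dvd_of_mul_dvd_mul_right (Nat.gcd_pos_of_pos_left _ three_pos)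
    (Nat.dvd_of_mul_dvd_mul_left hq1 hdvd)

end Singer

section Transitivity
variable {F : Type*} [Field F] [Fintype F]

theorem card_GL_fin_three : Nat.card (GL (Fin 3) F) =
    (Fintype.card F ^ 2 + Fintype.card F + 1) *
      (Fintype.card F ^ 3 * (Fintype.card F - 1) ^ 3 * (Fintype.card F + 1)) := by
  rw [Matrix.card_GL_field, Fin.prod_univ_three]
  obtain ⟨t, ht⟩ := Nat.exists_eq_add_one.2 (Fintype.card_pos (α := F))
  have h1 : (t + 1) ^ 3 - (t + 1) = (t + 1) * t * (t + 1 + 1) := Nat.sub_eq_of_eq_add (by ring)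
  have h2 : (t + 1) ^ 3 - (t + 1) ^ 2 = (t + 1) ^ 2 * t := Nat.sub_eq_of_eq_add (by ring)
  simp only [ht, Fin.val_zero, Fin.val_one, Fin.val_two, pow_zero, pow_one, Nat.add_sub_cancel, h1,
    h2, pow_three_sub_one (Nat.add_one_pos t)]
  ring

theorem card_projectivization_fin_three :
    Nat.card (ℙ F (Fin 3 → F)) = Fintype.card F ^ 2 + Fintype.card F + 1 := by
  rw [Projectivization.card_of_finrank F _ (Module.finrank_fin_fun F)]
  simp only [Finset.sum_range_succ, Finset.sum_range_zero, Nat.card_eq_fintype_card]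
  ring

theorem card_stabilizer_dvd (P : ℙ F (Fin 3 → F)) :
    Nat.card (MulAction.stabilizer SL(3, F) P) ∣
      Fintype.card F ^ 3 * (Fintype.card F - 1) ^ 3 * (Fintype.card F + 1) := by
  have hGL : Nat.card SL(3, F) ∣ Nat.card (GL (Fin 3) F) :=
    Subgroup.card_dvd_of_injective _ Matrix.SpecialLinearGroup.toGL_injective
  rw [← (MulAction.stabilizer SL(3, F) P).card_mul_index, mul_comm,
    MulAction.index_stabilizer_of_transitive, card_projectivization_fin_three,
    card_GL_fin_three] at hGL
  exact Nat.dvd_of_mul_dvd_mul_left (Nat.succ_pos _) hGL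

theorem mulVec_rep_eq_of_smul_eq {n : Type*} [Fintype n] [DecidableEq n] {l : ℕ}
    (hl : l.Coprime (Fintype.card F - 1)) {x : Matrix.SpecialLinearGroup n F} (hx : x ^ l = 1)
    {P : ℙ F (n → F)} (hP : x • P = P) : (x : Matrix n n F) *ᵥ P.rep = P.rep := by
  obtain ⟨c, hc⟩ : ∃ c : F, c • P.rep = x • P.rep :=
    (Projectivization.mk_eq_mk_iff' F _ _ ((smul_ne_zero_iff_ne x).2 P.rep_nonzero)
      P.rep_nonzero).1 (by rw [← Projectivization.smul_mk x P.rep_nonzero, P.mk_rep, hP])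
  have hc0 : c ≠ 0 := by
    rintro rfl
    rw [zero_smul] at hc
    exact (smul_ne_zero_iff_ne x).2 P.rep_nonzero hc.symm
  have hpow (k : ℕ) : c ^ k • P.rep = x ^ k • P.rep := by
    induction k with
    | zero => simp only [pow_zero, one_smul]
    | succ k ih => rw [pow_succ, pow_succ', mul_smul, mul_smul, ← ih, hc, smul_comm x]
  have hcl : c ^ l = 1 := by
    have := hpow l
    rw [hx, one_smul] at this
    exact smul_left_injective F P.rep_nonzero (this.trans (one_smul F _).symm)
  rw [eq_one_of_pow_eq_one_of_coprime hl hcl hc0, one_smul] at hc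
  exact hc.symm

theorem exists_eq_one_add_vecMulVec_of_smul_eq {l : ℕ} (hl : l.Coprime (Fintype.card F - 1))
    {x : SL(3, F)} (hx : x ^ l = 1) {P Q : ℙ F (Fin 3 → F)} (hPQ : P ≠ Q) (hP : x • P = P)
    (hQ : x • Q = Q) : ∃ v f : Fin 3 → F, (x : Matrix (Fin 3) (Fin 3) F) = 1 + vecMulVec v f := by
  have hlin : LinearIndependent F ![P.rep, Q.rep] := by
    have := Projectivization.independent_iff.1
      ((Projectivization.independent_pair_iff_ne P Q).2 hPQ)
    rwa [← FinVec.map_eq] at this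
  have hfix {R : ℙ F (Fin 3 → F)} (hR : x • R = R) :
      ((x : Matrix (Fin 3) (Fin 3) F) - 1) *ᵥ R.rep = 0 := by
    rw [sub_mulVec, one_mulVec, mulVec_rep_eq_of_smul_eq hl hx hR, sub_self]
  obtain ⟨v, hv⟩ := exists_eq_vecMulVec_cross hlin (hfix hP) (hfix hQ)
  exact ⟨v, _, sub_eq_iff_eq_add'.1 hv⟩

theorem exists_eq_one_add_vecMulVec_of_not_isPretransitive {M : Subgroup SL(3, F)}
    (hM : singerOrder (Fintype.card F) ∣ Nat.card M)
    (hMP : ¬MulAction.IsPretransitive M (ℙ F (Fin 3 → F))) {l : ℕ} (hl : l.Prime) (hl2 : l ≠ 2)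
    (hlq : l.Coprime (Fintype.card F - 1)) (hlq' : l ∣ Fintype.card F * (Fintype.card F + 1))
    {x : SL(3, F)} (hxM : x ∈ M) (hx : x ^ l = 1) :
    ∃ v f : Fin 3 → F, (x : Matrix (Fin 3) (Fin 3) F) = 1 + vecMulVec v f := by
  have hq : 0 < Fintype.card F := Fintype.card_pos
  have hln : ¬l ∣ singerOrder (Fintype.card F) := fun h ↦ by
    have hdvd := h.trans (Dvd.intro _ (singerOrder_mul_gcd hq))
    rw [show Fintype.card F ^ 2 + Fintype.card F + 1 = Fintype.card F * (Fintype.card F + 1) + 1 by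
      ring, Nat.dvd_add_right hlq', Nat.dvd_one] at hdvd
    exact hl.ne_one hdvd
  have horb (P : ℙ F (Fin 3 → F)) :
      singerOrder (Fintype.card F) ∣ Nat.card (MulAction.orbit M P) :=
    dvd_card_orbit_of_coprime_card_stabilizer M P hM
      ((coprime_singerOrder hq).coprime_dvd_right (card_stabilizer_dvd P))
  obtain ⟨P, Q, hPQ, hP, hQ⟩ := exists_ne_smul_eq_smul_eq horb
    (card_projectivization_fin_three.trans_le (sq_add_self_add_one_le_three_mul_singerOrder hq))
    hl hl2 hln hMP (g := ⟨x, hxM⟩) (Subtype.ext hx)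
  exact exists_eq_one_add_vecMulVec_of_smul_eq hlq hx hPQ hP hQ

theorem exists_orderOf_eq_of_dvd_card_GL {l : ℕ} (hl : l.Prime)
    (hlq : l.Coprime (Fintype.card F - 1)) (hl' : l ∣ Nat.card (GL (Fin 3) F)) :
    ∃ y : SL(3, F), orderOf y = l := by
  have := Fact.mk hl
  obtain ⟨t, ht⟩ := exists_prime_orderOf_dvd_card' l hl'
  have hdet : (t : Matrix (Fin 3) (Fin 3) F).det = 1 := by
    refine eq_one_of_pow_eq_one_of_coprime hlq ?_ (Matrix.GeneralLinearGroup.det t).ne_zero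
    rw [← Matrix.det_pow, ← Units.val_pow_eq_pow_val, ← ht, pow_orderOf_eq_one, Units.val_one,
      Matrix.det_one]
  let y : SL(3, F) := ⟨t, hdet⟩
  have hy : Matrix.SpecialLinearGroup.toGL y = t := Units.ext rfl
  exact ⟨y, by rw [← ht, ← hy, orderOf_injective _ Matrix.SpecialLinearGroup.toGL_injective]⟩

theorem MeetsEveryAutClass.isPretransitive_of_odd {p : ℕ} [Fact p.Prime] [CharP F p] (hp2 : p ≠ 2)
    {L : Subgroup (ProjSL 3 F)} (hL : MeetsEveryAutClass L)
    (hM : singerOrder (Fintype.card F) ∣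
      Nat.card (L.comap (QuotientGroup.mk' (Subgroup.center SL(3, F))))) :
    MulAction.IsPretransitive (L.comap (QuotientGroup.mk' (Subgroup.center SL(3, F))))
      (ℙ F (Fin 3 → F)) := by
  by_contra hMP
  obtain ⟨u, hup, hu, hu1⟩ := ProjSL.exists_pow_char_eq_one_hasAbelianCentralizer (F := F) hp2
  obtain ⟨φ, hφ⟩ := hL u
  obtain ⟨y, hyu, hyp⟩ := ProjSL.exists_coe_eq_pow_eq_one (x := φ u)
    (by rw [← map_pow, hup, map_one])
  obtain ⟨v, f, hvf⟩ := exists_eq_one_add_vecMulVec_of_not_isPretransitive hM hMP Fact.out hp2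
    (coprime_card_sub_one_of_charP F p) ((CharP.cast_eq_zero_iff F p _).1 (by simp))
    (x := y) (by simpa only [Subgroup.mem_comap, QuotientGroup.mk'_apply, hyu] using hφ) hyp
  have hvf0 : vecMulVec v f ≠ 0 := fun h ↦ hu1 <| by
    have hy1 : y = 1 := Subtype.ext (by rw [hvf, h, add_zero, Matrix.SpecialLinearGroup.coe_one])
    rwa [hy1, QuotientGroup.mk_one, eq_comm, map_eq_one_iff φ φ.injective] at hyu
  rw [Ne, vecMulVec_eq_zero, not_or] at hvf0
  refine ProjSL.not_hasAbelianCentralizer hvf0.1 hvf0.2 hvf (hyu ▸ .of_map φ.symm ?_)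
  rwa [φ.symm_apply_apply]

theorem MeetsEveryAutClass.isPretransitive_of_charTwo [CharP F 2]
    {L : Subgroup (ProjSL 3 F)} (hL : MeetsEveryAutClass L)
    (hM : singerOrder (Fintype.card F) ∣
      Nat.card (L.comap (QuotientGroup.mk' (Subgroup.center SL(3, F))))) :
    MulAction.IsPretransitive (L.comap (QuotientGroup.mk' (Subgroup.center SL(3, F))))
      (ℙ F (Fin 3 → F)) := by
  by_contra hMP
  have hq : 0 < Fintype.card F := Fintype.card_pos
  obtain ⟨l, hl, hlq⟩ := Nat.exists_prime_and_dvd (n := Fintype.card F + 1) (by lia)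
  have hq2 : 2 ∣ Fintype.card F := (CharP.cast_eq_zero_iff F 2 _).1 (by simp)
  have hl2 : l ≠ 2 := by rintro rfl; lia
  have hcop : l.Coprime (Fintype.card F - 1) := by
    refine hl.coprime_iff_not_dvd.2 fun h ↦ hl2 ?_
    have h2 := Nat.dvd_sub hlq h
    rw [show Fintype.card F + 1 - (Fintype.card F - 1) = 2 by lia] at h2
    exact (Nat.prime_dvd_prime_iff_eq hl Nat.prime_two).1 h2
  obtain ⟨y, hy⟩ := exists_orderOf_eq_of_dvd_card_GL hl hcop
    (card_GL_fin_three (F := F) ▸ (hlq.mul_left _).mul_left _)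
  have := Fact.mk hl
  have hyl : orderOf (y : ProjSL 3 F) = l := by
    have hpow : y ^ l = 1 := hy ▸ pow_orderOf_eq_one y
    refine orderOf_eq_prime (by rw [← QuotientGroup.mk_pow, hpow, QuotientGroup.mk_one]) fun h ↦ ?_
    rw [ProjSL.eq_one_of_coe_eq_one hcop hpow h, orderOf_one] at hy
    exact hl.ne_one hy.symm
  obtain ⟨⟨x, hxM⟩, hx⟩ := exists_prime_orderOf_dvd_card' l (hyl ▸ hL.orderOf_dvd_card_comap_mk' y)
  rw [Subgroup.orderOf_mk] at hx
  obtain ⟨v, f, hvf⟩ := exists_eq_one_add_vecMulVec_of_not_isPretransitive hM hMP hl hl2 hcop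
    (hlq.mul_left _) hxM (hx ▸ pow_orderOf_eq_one x)
  have hx2 : x ^ 2 = 1 := pow_char_eq_one_of_eq_one_add_vecMulVec hvf
  rw [← orderOf_dvd_iff_pow_eq_one, hx] at hx2
  exact hl2 ((Nat.prime_dvd_prime_iff_eq hl Nat.prime_two).1 hx2)

end Transitivity

section Conjugation
variable {n F : Type*} [Fintype n] [DecidableEq n] [Field F]

/-- The automorphism of `SL` induced by conjugation with an element `P` of `GL`, `x ↦ P x P⁻¹`. -/
def conjSL (P : GL n F) : Matrix.SpecialLinearGroup n F ≃* Matrix.SpecialLinearGroup n F where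
  toFun x := ⟨P.val * x * P⁻¹.val, (det_units_conj P x.1).trans x.2⟩
  invFun x := ⟨P⁻¹.val * x * P.val, (det_units_conj' P x.1).trans x.2⟩
  left_inv x := Subtype.ext (by simp [mul_assoc])
  right_inv x := Subtype.ext (by simp [mul_assoc])
  map_mul' x y := Subtype.ext <| by
    change P.val * (x.1 * y.1) * P⁻¹.val = P.val * x.1 * P⁻¹.val * (P.val * y.1 * P⁻¹.val)
    simp only [mul_assoc, Units.inv_mul_cancel_left]

theorem ProjSL.exists_mulEquiv_apply_eq {d : ℕ} {P : GL (Fin d) F} {x y : SL(d, F)}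
    (h : P.val * x * P⁻¹.val = y) : ∃ φ : ProjSL d F ≃* ProjSL d F, φ x = y := by
  refine ⟨QuotientGroup.congr _ _ (conjSL P)
    (Subgroup.characteristic_iff_map_eq.1 inferInstance _), congrArg _ (Subtype.ext h)⟩

theorem exists_mul_eq_mul_leftMulMatrix {E : Type*} [Field E] [Algebra F E]
    (b : Module.Basis n F E) (ψ : E →ₐ[F] Matrix n n F) :
    ∃ P : GL n F, ∀ a : E, ψ a * P.val = P.val * Algebra.leftMulMatrix b a := by
  have := Module.Finite.of_basis b
  have : Nonempty n := b.index_nonempty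
  obtain ⟨v, hv⟩ := exists_ne (0 : n → F)
  let T : E →ₗ[F] n → F := LinearMap.flip (mulVecBilin F F) v ∘ₗ ψ.toLinearMap
  have hT : Function.Injective T := by
    refine (injective_iff_map_eq_zero T).2 fun a ha ↦ by_contra fun ha0 ↦ hv ?_
    calc v = ψ (a⁻¹ * a) *ᵥ v := by rw [inv_mul_cancel₀ ha0, map_one, one_mulVec]
      _ = ψ a⁻¹ *ᵥ T a := by rw [map_mul, ← mulVec_mulVec]; rfl
      _ = 0 := by rw [ha, mulVec_zero]
  let e : E ≃ₗ[F] n → F := LinearEquiv.ofInjectiveOfFinrankEq T hT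
    (by rw [Module.finrank_eq_card_basis b, Module.finrank_fintype_fun_eq_card])
  let c := Pi.basisFun F n
  refine ⟨⟨LinearMap.toMatrix b c e, LinearMap.toMatrix c b e.symm,
    by rw [← LinearMap.toMatrix_comp, LinearEquiv.comp_symm, LinearMap.toMatrix_id],
    by rw [← LinearMap.toMatrix_comp, LinearEquiv.symm_comp, LinearMap.toMatrix_id]⟩, fun a ↦ ?_⟩
  have hψ : ψ a = LinearMap.toMatrix c c (ψ a).toLin' := by
    rw [LinearMap.toMatrix_eq_toMatrix', LinearMap.toMatrix'_toLin']
  change ψ a * LinearMap.toMatrix b c e = LinearMap.toMatrix b c e * LinearMap.toMatrix b b _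
  rw [hψ, ← LinearMap.toMatrix_comp, ← LinearMap.toMatrix_comp]
  congr 1
  ext x : 1
  change ψ a *ᵥ (ψ x *ᵥ v) = ψ (a * x) *ᵥ v
  rw [map_mul, mulVec_mulVec]

theorem exists_conj_eq_leftMulMatrix_of_irreducible_charpoly [Finite F] {E : Type*} [Field E]
    [Algebra F E] (b : Module.Basis n F E) {x : Matrix n n F} (hx : Irreducible x.charpoly) :
    ∃ (P : GL n F) (a : E), P.val * x * P⁻¹.val = Algebra.leftMulMatrix b a := by
  have := Module.Finite.of_basis b
  have := Module.finite_of_finite F (M := E)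
  have := Fact.mk hx
  have hrank : Module.finrank F E = Module.finrank F (AdjoinRoot x.charpoly) := by
    rw [Module.finrank_eq_card_basis b, (AdjoinRoot.powerBasis hx.ne_zero).finrank,
      AdjoinRoot.powerBasis_dim, charpoly_natDegree_eq_dim]
  have := (AdjoinRoot.powerBasis hx.ne_zero).finite
  have := Module.finite_of_finite F (M := AdjoinRoot x.charpoly)
  obtain ⟨θ⟩ : Nonempty (E →ₐ[F] AdjoinRoot x.charpoly) :=
    FiniteField.nonempty_algHom_of_finrank_dvd hrank.dvd
  obtain ⟨a, ha⟩ := (LinearMap.injective_iff_surjective_of_finrank_eq_finrank hrank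
    (f := θ.toLinearMap)).1 θ.toRingHom.injective (AdjoinRoot.root x.charpoly)
  let ψ : AdjoinRoot x.charpoly →ₐ[F] Matrix n n F := Ideal.Quotient.liftₐ _ (aeval x) fun f hf ↦ by
    obtain ⟨g, rfl⟩ := Ideal.mem_span_singleton.1 hf
    rw [map_mul, aeval_self_charpoly, zero_mul]
  obtain ⟨P, hP⟩ := exists_mul_eq_mul_leftMulMatrix b (ψ.comp θ)
  have hψ : ψ.comp θ a = x := (congrArg ψ ha).trans (aeval_X x)
  refine ⟨P⁻¹, a, ?_⟩
  rw [inv_inv, mul_assoc, ← hψ, hP a, Units.inv_mul_cancel_left]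

end Conjugation

section WeakNormalCovering
variable {F : Type*} [Field F]

theorem MeetsEveryAutClass.eq_top [Finite F] {E : Type*} [Field E] [Algebra F E]
    (b : Module.Basis (Fin 3) F E) {L : Subgroup (ProjSL 3 F)} (hL : MeetsEveryAutClass L) :
    L = ⊤ := by
  have := Fintype.ofFinite F
  obtain ⟨g, hg⟩ := ProjSL.exists_singerOrder_dvd_orderOf b
  have hM := hg.trans (hL.orderOf_dvd_card_comap_mk' g)
  obtain ⟨p, hp⟩ := CharP.exists F
  have := Fact.mk (CharP.char_is_prime F p)
  have : MulAction.IsPretransitive (L.comap (QuotientGroup.mk' (Subgroup.center SL(3, F))))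
      (ℙ F (Fin 3 → F)) := by
    obtain rfl | hp2 := eq_or_ne p 2
    · exact hL.isPretransitive_of_charTwo hM
    · exact hL.isPretransitive_of_odd hp2 hM
  obtain ⟨v, f, hv, hf, hvf⟩ := ProjSL.exists_hasTransvection hL
  exact Subgroup.comap_injective (QuotientGroup.mk'_surjective _)
    ((eq_top_of_isPretransitive hv hf hvf).trans (Subgroup.comap_top _).symm)

/-- The image in `PSL` of the stabilizer of a point of projective space: a maximal parabolic
subgroup, the first member of the covering. -/
def ProjSL.pointStabilizer {d : ℕ} (P : ℙ F (Fin d → F)) : Subgroup (ProjSL d F) :=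
  (MulAction.stabilizer SL(d, F) P).map (QuotientGroup.mk' _)

/-- The image in `PSL` of the norm-one group of `E`, acting on `E ≅ F^d` by multiplication: a cyclic
torus when `F` is finite, the second member of the covering. -/
noncomputable def ProjSL.fieldTorus {d : ℕ} {E : Type*} [Field E] [Algebra F E]
    (b : Module.Basis (Fin d) F E) : Subgroup (ProjSL d F) :=
  ((Units.map (Algebra.leftMulMatrix b).toMonoidHom).range.comap
    Matrix.SpecialLinearGroup.toGL).map (QuotientGroup.mk' _)

theorem ProjSL.pointStabilizer_ne_top {d : ℕ} (hd : 2 ≤ d) (P : ℙ F (Fin d → F)) :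
    ProjSL.pointStabilizer P ≠ ⊤ := fun h ↦ by
  obtain ⟨Q, hQ⟩ : ∃ Q, Q ≠ P := by
    obtain ⟨w, hw⟩ := exists_linearIndependent_pair_of_one_lt_finrank
      (hd.trans_eq (Module.finrank_fin_fun F).symm) P.rep_nonzero
    have hw0 : w ≠ 0 := hw.ne_zero 1
    refine ⟨Projectivization.mk F w hw0, fun hwP ↦ ?_⟩
    obtain ⟨c, hc⟩ := (Projectivization.mk_eq_mk_iff' F _ _ hw0 P.rep_nonzero).1
      (hwP.trans P.mk_rep.symm)
    exact (LinearIndependent.pair_iff' P.rep_nonzero).1 hw c hc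
  obtain ⟨g, rfl⟩ := MulAction.exists_smul_eq SL(d, F) P Q
  obtain ⟨s, hs, hsg⟩ : (g : ProjSL d F) ∈ ProjSL.pointStabilizer P := h ▸ Subgroup.mem_top _
  obtain ⟨z, -, hz⟩ := ProjSL.coe_eq_coe_iff.1 hsg
  refine hQ ((?_ : g • P = s • P).trans hs)
  rw [← P.mk_rep, Projectivization.smul_mk, Projectivization.smul_mk,
    Projectivization.mk_eq_mk_iff']
  refine ⟨z, ?_⟩
  change z • ((s : Matrix (Fin d) (Fin d) F) *ᵥ P.rep) = (g : Matrix (Fin d) (Fin d) F) *ᵥ P.rep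
  rw [hz, smul_mulVec]

theorem ProjSL.fieldTorus_ne_top {E : Type*} [Field E] [Algebra F E]
    (b : Module.Basis (Fin 3) F E) : ProjSL.fieldTorus b ≠ ⊤ := fun h ↦ by
  have hcomm (x y : ProjSL 3 F) : Commute x y := by
    obtain ⟨s, ⟨u, hu⟩, rfl⟩ : x ∈ ProjSL.fieldTorus b := h ▸ Subgroup.mem_top x
    obtain ⟨t, ⟨w, hw⟩, rfl⟩ : y ∈ ProjSL.fieldTorus b := h ▸ Subgroup.mem_top y
    refine Commute.map (Matrix.SpecialLinearGroup.toGL_injective ?_) _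
    rw [map_mul, map_mul, ← hu, ← hw, ← map_mul, ← map_mul, mul_comm]
  obtain ⟨t, ht⟩ := exists_coe_eq_one_add_vecMulVec (v := Pi.single (0 : Fin 3) (1 : F))
    (f := Pi.single 1 1) (by simp)
  exact ProjSL.not_hasAbelianCentralizer (by simp) (by simp) ht fun x y _ _ ↦ hcomm x y

theorem ProjSL.exists_mulEquiv_mem_pointStabilizer {d : ℕ} (P : ℙ F (Fin d → F)) {x : SL(d, F)}
    {c : F} (hc : (x : Matrix (Fin d) (Fin d) F).charpoly.IsRoot c) :
    ∃ φ : ProjSL d F ≃* ProjSL d F, φ x ∈ ProjSL.pointStabilizer P := by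
  rw [IsRoot, Matrix.eval_charpoly] at hc
  obtain ⟨v, hv, hxv⟩ := Matrix.exists_mulVec_eq_zero_iff.2 hc
  rw [sub_mulVec, sub_eq_zero, scalar_apply, ← smul_one_eq_diagonal, smul_mulVec, one_mulVec] at hxv
  have hfix : x • Projectivization.mk F v hv = Projectivization.mk F v hv :=
    (Projectivization.smul_mk x hv).trans ((Projectivization.mk_eq_mk_iff' F _ _ _ hv).2 ⟨c, hxv⟩)
  obtain ⟨g, rfl⟩ := MulAction.exists_smul_eq SL(d, F) (Projectivization.mk F v hv) P
  refine ⟨MulAut.conj (g : ProjSL d F), g * x * g⁻¹, ?_, rfl⟩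
  change (g * x * g⁻¹) • g • _ = g • _
  rw [mul_smul, mul_smul, inv_smul_smul, hfix]

theorem ProjSL.exists_mulEquiv_mem_fieldTorus [Finite F] {d : ℕ} {E : Type*} [Field E] [Algebra F E]
    (b : Module.Basis (Fin d) F E) {x : SL(d, F)}
    (hx : Irreducible (x : Matrix (Fin d) (Fin d) F).charpoly) :
    ∃ φ : ProjSL d F ≃* ProjSL d F, φ x ∈ ProjSL.fieldTorus b := by
  obtain ⟨P, a, hPa⟩ := exists_conj_eq_leftMulMatrix_of_irreducible_charpoly b hx
  have hdet : (Algebra.leftMulMatrix b a).det = 1 := by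
    rw [← hPa, det_units_conj, x.det_coe]
  have ha : a ≠ 0 := by
    rintro rfl
    have := b.index_nonempty
    rw [map_zero, det_zero] at hdet
    exact zero_ne_one hdet
  obtain ⟨φ, hφ⟩ := ProjSL.exists_mulEquiv_apply_eq (y := ⟨_, hdet⟩) hPa
  exact ⟨φ, _, ⟨Units.mk0 a ha, Units.ext rfl⟩, hφ.symm⟩

theorem ProjSL.exists_mulEquiv_mem_pointStabilizer_or_mem_fieldTorus [Finite F] {E : Type*}
    [Field E] [Algebra F E] (P : ℙ F (Fin 3 → F)) (b : Module.Basis (Fin 3) F E) (g : ProjSL 3 F) :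
    ∃ φ : ProjSL 3 F ≃* ProjSL 3 F,
      φ g ∈ ProjSL.pointStabilizer P ∨ φ g ∈ ProjSL.fieldTorus b := by
  obtain ⟨x, rfl⟩ := QuotientGroup.mk_surjective g
  by_cases hroot : ∃ c, (x : Matrix (Fin 3) (Fin 3) F).charpoly.IsRoot c
  · obtain ⟨c, hc⟩ := hroot
    exact (ProjSL.exists_mulEquiv_mem_pointStabilizer P hc).imp fun _ ↦ Or.inl
  · have hdeg : (x : Matrix (Fin 3) (Fin 3) F).charpoly.natDegree = 3 := by
      rw [charpoly_natDegree_eq_dim, Fintype.card_fin]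
    have hirr : Irreducible (x : Matrix (Fin 3) (Fin 3) F).charpoly :=
      (irreducible_iff_roots_eq_zero_of_degree_le_three (by lia) (by lia)).2 <|
        Multiset.eq_zero_of_forall_notMem fun c hc ↦ hroot ⟨c, isRoot_of_mem_roots hc⟩
    exact (ProjSL.exists_mulEquiv_mem_fieldTorus b hirr).imp fun _ ↦ Or.inr

end WeakNormalCovering

/-- **The weak normal covering number of `PSL₃(q)` equals 2** for every prime power `q`. -/
theorem gammaW_PSL3_eq_two (q : ℕ) (hq : IsPrimePow q)
    (F : Type*) [Field F] [Fintype F] (hF : Fintype.card F = q) :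
    (∃ H K : Subgroup (ProjSL 3 F), H ≠ ⊤ ∧ K ≠ ⊤ ∧
        ∀ g : ProjSL 3 F,
          ∃ φ : ProjSL 3 F ≃* ProjSL 3 F, φ g ∈ H ∨ φ g ∈ K) ∧
      ¬ ∃ L : Subgroup (ProjSL 3 F), L ≠ ⊤ ∧
          ∀ g : ProjSL 3 F,
            ∃ φ : ProjSL 3 F ≃* ProjSL 3 F, φ g ∈ L := by
  obtain ⟨p, hp⟩ := CharP.exists F
  have := Fact.mk (CharP.char_is_prime F p)
  let b : Module.Basis (Fin 3) F (FiniteField.Extension F p 3) :=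
    Module.finBasisOfFinrankEq F _ (FiniteField.finrank_extension F p 3)
  obtain ⟨P⟩ : Nonempty (ℙ F (Fin 3 → F)) := inferInstance
  exact ⟨⟨_, _, ProjSL.pointStabilizer_ne_top (by norm_num) P, ProjSL.fieldTorus_ne_top b,
    ProjSL.exists_mulEquiv_mem_pointStabilizer_or_mem_fieldTorus P b⟩,
    fun ⟨_, hL, hmeets⟩ ↦ hL (MeetsEveryAutClass.eq_top b hmeets)⟩
end
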